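/- arXiv:math/0505041 — 12 statements merged into one kernel-verified Lean document; each statement's English description precedes it below -/
import Mathlib

section
/- (q-Racah parameter array.) Let d be a non-negative integer and let q, s, s*, r be nonzero scalars in K. Define, for 0 ≤ i ≤ d, θ_i = s·q^{d−2i} + q^{2i−d}/s and θ*_i = s*·q^{d−2i} + q^{2i−d}/s*, and, for 1 ≤ i ≤ d, φ_i = (q^{2d+2−4i}/(s·s*·r))·(1 − q^{2i})(1 − q^{2i−2d−2})(s·s* − r·q^{2i−d−1})(s·s*·r − q^{2i−d−1}) and ϕ_i = (q^{2d+2−4i}/(s·s*·r))·(1 − q^{2i})(1 − q^{2i−2d−2})(s*·r − s·q^{2i−d−1})(s* − s·r·q^{2i−d−1}). Assume θ_i ≠ θ_j and θ*_i ≠ θ*_j for 0 ≤ i < j ≤ d, and φ_i ≠ 0 and ϕ_i ≠ 0 for 1 ≤ i ≤ d. Then (θ_0,…,θ_d; θ*_0,…,θ*_d; φ_1,…,φ_d; ϕ_1,…,ϕ_d) is a parameter array over K of diameter d, i.e., conditions PA3, PA4 and PA5 also hold. -/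
theorem qR_zp {K : Type*} [Field K] (q : K) (hq : q ≠ 0) (a b c : ℤ) (d i : ℕ) (e : ℤ)
    (h : e = a * d + b * i + c) :
    q ^ e = (q ^ d) ^ a * (q ^ i) ^ b * q ^ c := by
  rw [h, zpow_add₀ hq, zpow_add₀ hq, mul_comm a, mul_comm b, zpow_mul, zpow_mul,
    zpow_natCast, zpow_natCast]

theorem qR_sum {K : Type*} [Field K] (q D : K) (hq : q ≠ 0) (hD : D ≠ 0) (i : ℕ) :
    (∑ j ∈ Finset.range i, (D / (q ^ j) ^ 2 - (q ^ j) ^ 2 / D)) * (q - 1 / q) =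
      (q ^ i - 1 / q ^ i) * (D * q / q ^ i - q ^ i / (D * q)) := by
  induction i with
  | zero => simp
  | succ n ih =>
    rw [Finset.sum_range_succ, add_mul, ih, pow_succ q n]
    have : q ^ n ≠ 0 := pow_ne_zero _ hq
    generalize q ^ n = x at *
    field_simp
    ring

/-- The q-Racah data forms a parameter array: PA3, PA4 and PA5 hold. -/
theorem qRacah_parameter_array
    {K : Type*} [Field K] [IsAlgClosed K] (hchar : ringChar K ≠ 2)
    (d : ℕ) (q s ss r : K) (hq : q ≠ 0) (hs : s ≠ 0) (hss : ss ≠ 0) (hr : r ≠ 0)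
    (θ θs φ ϕ : ℕ → K)
    (hθ : ∀ i : ℕ, i ≤ d → θ i = s * q ^ ((d : ℤ) - 2 * i) + q ^ (2 * (i : ℤ) - d) / s)
    (hθs : ∀ i : ℕ, i ≤ d → θs i = ss * q ^ ((d : ℤ) - 2 * i) + q ^ (2 * (i : ℤ) - d) / ss)
    (hφ : ∀ i : ℕ, 1 ≤ i → i ≤ d →
      φ i = q ^ (2 * (d : ℤ) + 2 - 4 * i) / (s * ss * r) *
        (1 - q ^ (2 * (i : ℤ))) * (1 - q ^ (2 * (i : ℤ) - 2 * d - 2)) *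
        (s * ss - r * q ^ (2 * (i : ℤ) - d - 1)) * (s * ss * r - q ^ (2 * (i : ℤ) - d - 1)))
    (hϕ : ∀ i : ℕ, 1 ≤ i → i ≤ d →
      ϕ i = q ^ (2 * (d : ℤ) + 2 - 4 * i) / (s * ss * r) *
        (1 - q ^ (2 * (i : ℤ))) * (1 - q ^ (2 * (i : ℤ) - 2 * d - 2)) *
        (ss * r - s * q ^ (2 * (i : ℤ) - d - 1)) * (ss - s * r * q ^ (2 * (i : ℤ) - d - 1)))
    (hPA1 : ∀ i j : ℕ, i < j → j ≤ d → θ i ≠ θ j ∧ θs i ≠ θs j)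
    (hPA2 : ∀ i : ℕ, 1 ≤ i → i ≤ d → φ i ≠ 0 ∧ ϕ i ≠ 0) :
    (∀ i : ℕ, 1 ≤ i → i ≤ d →
      φ i = ϕ 1 * (∑ j ∈ Finset.range i, (θ j - θ (d - j)) / (θ 0 - θ d)) +
        (θs i - θs 0) * (θ (i - 1) - θ d)) ∧
    (∀ i : ℕ, 1 ≤ i → i ≤ d →
      ϕ i = φ 1 * (∑ j ∈ Finset.range i, (θ j - θ (d - j)) / (θ 0 - θ d)) +
        (θs i - θs 0) * (θ (d - i + 1) - θ 0)) ∧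
    (∃ β : K, ∀ i : ℕ, 2 ≤ i → i ≤ d - 1 →
      (θ (i - 2) - θ (i + 1)) / (θ (i - 1) - θ i) = β ∧
      (θs (i - 2) - θs (i + 1)) / (θs (i - 1) - θs i) = β) := by
  have hD : q ^ d ≠ 0 := pow_ne_zero _ hq
  have hx : ∀ i : ℕ, q ^ i ≠ 0 := fun i => pow_ne_zero _ hq
  have nθ : ∀ i : ℕ, i ≤ d → θ i = s * (q ^ d / (q ^ i) ^ 2) + (q ^ i) ^ 2 / q ^ d / s := by
    intro i hi
    have := hx i
    rw [hθ i hi, qR_zp q hq 1 (-2) 0 d i ((d : ℤ) - 2 * i) (by ring), qR_zp q hq (-1) 2 0 d i (2 * (i : ℤ) - d) (by ring)]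
    generalize q ^ d = D at *
    generalize q ^ i = x at *
    field_simp
  have nθs : ∀ i : ℕ, i ≤ d → θs i = ss * (q ^ d / (q ^ i) ^ 2) + (q ^ i) ^ 2 / q ^ d / ss := by
    intro i hi
    have := hx i
    rw [hθs i hi, qR_zp q hq 1 (-2) 0 d i ((d : ℤ) - 2 * i) (by ring), qR_zp q hq (-1) 2 0 d i (2 * (i : ℤ) - d) (by ring)]
    generalize q ^ d = D at *
    generalize q ^ i = x at *
    field_simp
  have e1 : ∀ i : ℕ, q ^ (2 * (d : ℤ) + 2 - 4 * i) = (q ^ d) ^ 2 * q ^ 2 / (q ^ i) ^ 4 := by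
    intro i
    have := hx i
    rw [qR_zp q hq 2 (-4) 2 d i _ (by ring)]
    generalize q ^ d = D at *
    generalize q ^ i = x at *
    field_simp
  have e2 : ∀ i : ℕ, q ^ (2 * (i : ℤ)) = (q ^ i) ^ 2 := by
    intro i
    rw [qR_zp q hq 0 2 0 d i _ (by ring)]
    simp
  have e3 : ∀ i : ℕ, q ^ (2 * (i : ℤ) - 2 * d - 2) = (q ^ i) ^ 2 / ((q ^ d) ^ 2 * q ^ 2) := by
    intro i
    have := hx i
    rw [qR_zp q hq (-2) 2 (-2) d i _ (by ring)]
    generalize q ^ d = D at *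
    generalize q ^ i = x at *
    field_simp
  have e4 : ∀ i : ℕ, q ^ (2 * (i : ℤ) - d - 1) = (q ^ i) ^ 2 / (q ^ d * q) := by
    intro i
    have := hx i
    rw [qR_zp q hq (-1) 2 (-1) d i _ (by ring)]
    generalize q ^ d = D at *
    generalize q ^ i = x at *
    field_simp
  simp only [e1, e2, e3, e4] at hφ hϕ
  have hsum : ∀ i : ℕ, 1 ≤ i → i ≤ d → q ^ 2 - 1 ≠ 0 ∧ (q ^ d) ^ 2 - 1 ≠ 0 ∧
      ∑ j ∈ Finset.range i, (θ j - θ (d - j)) / (θ 0 - θ d) =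
      (q ^ i - 1 / q ^ i) * (q ^ d * q / q ^ i - q ^ i / (q ^ d * q)) /
        ((q - 1 / q) * (q ^ d - 1 / q ^ d)) := by
    intro i h1 hi
    have h0d := (hPA1 0 d (by omega) le_rfl).1
    have h01 := (hPA1 0 1 (by omega) (by omega)).1
    have hq1 : q ^ 2 - 1 ≠ 0 := by
      intro h
      apply h01
      have h : q ^ 2 = 1 := by linear_combination h
      rw [nθ 0 (by omega), nθ 1 (by omega)]
      simp [h]
    have t0 : θ 0 - θ d = (s - 1 / s) * (q ^ d - 1 / q ^ d) := by
      rw [nθ 0 (by omega), nθ d le_rfl, pow_zero]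
      generalize q ^ d = D at *
      field_simp
      ring
    have t0n : (s - 1 / s) * (q ^ d - 1 / q ^ d) ≠ 0 := t0 ▸ sub_ne_zero.2 h0d
    have hs1 : s - 1 / s ≠ 0 := left_ne_zero_of_mul t0n
    have hD1 : q ^ d - 1 / q ^ d ≠ 0 := right_ne_zero_of_mul t0n
    refine ⟨hq1, ?_, ?_⟩
    · intro h
      apply hD1
      field_simp
      linear_combination h
    have hqq : q - 1 / q ≠ 0 := by
      intro h
      apply hq1
      field_simp at h
      linear_combination h
    rw [← qR_sum q (q ^ d) hq hD i, ← Finset.sum_div, t0]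
    have : ∑ j ∈ Finset.range i, (θ j - θ (d - j)) =
        (s - 1 / s) * ∑ j ∈ Finset.range i, (q ^ d / (q ^ j) ^ 2 - (q ^ j) ^ 2 / q ^ d) := by
      rw [Finset.mul_sum]
      refine Finset.sum_congr rfl fun j hj => ?_
      have hj := Finset.mem_range.1 hj
      rw [nθ j (by omega), nθ (d - j) (by omega), pow_sub₀ q hq (by omega : j ≤ d)]
      have := hx j
      generalize q ^ d = D at *
      generalize q ^ j = x at *
      field_simp
      ring
    rw [this, mul_div_mul_left _ _ hs1, mul_comm (q - 1 / q), mul_div_mul_right _ _ hqq]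
  refine ⟨?_, ?_, q ^ 2 + 1 + 1 / q ^ 2, ?_⟩
  · intro i h1 hi
    obtain ⟨hq1, hD1, hS⟩ := hsum i h1 hi
    rw [hS, hφ i h1 hi, hϕ 1 le_rfl (by omega), nθs i hi, nθs 0 (by omega),
      nθ (i - 1) (by omega), nθ d le_rfl, pow_sub₀ q hq h1, pow_zero, pow_one]
    have := hx i
    generalize q ^ d = D at *
    generalize q ^ i = x at *
    field_simp
    ring
  · intro i h1 hi
    obtain ⟨hq1, hD1, hS⟩ := hsum i h1 hi
    rw [hS, hϕ i h1 hi, hφ 1 le_rfl (by omega), nθs i hi, nθs 0 (by omega),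
      nθ (d - i + 1) (by omega), nθ 0 (by omega), pow_succ q (d - i), pow_sub₀ q hq hi, pow_zero, pow_one]
    have := hx i
    generalize q ^ d = D at *
    generalize q ^ i = x at *
    field_simp
    ring
  · intro i h2 hi
    have h := hPA1 (i - 1) i (by omega) (by omega)
    obtain ⟨k, rfl⟩ : ∃ k, i = k + 2 := ⟨i - 2, by omega⟩
    have i1 : k + 2 - 1 = k + 1 := by omega
    have i2 : k + 2 - 2 = k := by omega
    rw [i1] at h
    rw [i1, i2]
    constructor
    · rw [div_eq_iff (sub_ne_zero.2 h.1), nθ k (by omega), nθ (k + 1) (by omega),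
        nθ (k + 2) (by omega), nθ (k + 2 + 1) (by omega)]
      simp only [pow_succ q]
      have := hx k
      generalize q ^ d = D at *
      generalize q ^ k = x at *
      field_simp
      ring
    · rw [div_eq_iff (sub_ne_zero.2 h.2), nθs k (by omega), nθs (k + 1) (by omega),
        nθs (k + 2) (by omega), nθs (k + 2 + 1) (by omega)]
      simp only [pow_succ q]
      have := hx k
      generalize q ^ d = D at *
      generalize q ^ k = x at *
      field_simp
      ring
end

section
/- (q-Hahn parameter array.) Let d be a non-negative integer and let q, s*, r be nonzero scalars in K. Define, for 0 ≤ i ≤ d, θ_i = q^{−i} and θ*_i = q^{−i} + s*·q^{i+1}, and, for 1 ≤ i ≤ d, φ_i = q^{1−2i}·(1 − q^i)(1 − q^{i−d−1})(1 − r·q^i) and ϕ_i = −q^{1−i}·(1 − q^i)(1 − q^{i−d−1})(r − s*·q^i). Assume θ_i ≠ θ_j and θ*_i ≠ θ*_j for 0 ≤ i < j ≤ d, and φ_i ≠ 0 and ϕ_i ≠ 0 for 1 ≤ i ≤ d. Then (θ_0,…,θ_d; θ*_0,…,θ*_d; φ_1,…,φ_d; ϕ_1,…,ϕ_d) is a parameter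 array over K of diameter d, i.e., conditions PA3, PA4 and PA5 also hold. -/
/-- The q-Hahn data forms a parameter array: PA3, PA4 and PA5 hold. -/
theorem qHahn_parameter_array
    {K : Type*} [Field K] [IsAlgClosed K] (hchar : ringChar K ≠ 2)
    (d : ℕ) (q ss r : K) (hq : q ≠ 0) (hss : ss ≠ 0) (hr : r ≠ 0)
    (θ θs φ ϕ : ℕ → K)
    (hθ : ∀ i : ℕ, i ≤ d → θ i = q ^ (-(i : ℤ)))
    (hθs : ∀ i : ℕ, i ≤ d → θs i = q ^ (-(i : ℤ)) + ss * q ^ ((i : ℤ) + 1))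
    (hφ : ∀ i : ℕ, 1 ≤ i → i ≤ d →
      φ i = q ^ (1 - 2 * (i : ℤ)) *
        (1 - q ^ (i : ℤ)) * (1 - q ^ ((i : ℤ) - d - 1)) * (1 - r * q ^ (i : ℤ)))
    (hϕ : ∀ i : ℕ, 1 ≤ i → i ≤ d →
      ϕ i = -q ^ (1 - (i : ℤ)) *
        (1 - q ^ (i : ℤ)) * (1 - q ^ ((i : ℤ) - d - 1)) * (r - ss * q ^ (i : ℤ)))
    (hPA1 : ∀ i j : ℕ, i < j → j ≤ d → θ i ≠ θ j ∧ θs i ≠ θs j)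
    (hPA2 : ∀ i : ℕ, 1 ≤ i → i ≤ d → φ i ≠ 0 ∧ ϕ i ≠ 0) :
    (∀ i : ℕ, 1 ≤ i → i ≤ d →
      φ i = ϕ 1 * (∑ j ∈ Finset.range i, (θ j - θ (d - j)) / (θ 0 - θ d)) +
        (θs i - θs 0) * (θ (i - 1) - θ d)) ∧
    (∀ i : ℕ, 1 ≤ i → i ≤ d →
      ϕ i = φ 1 * (∑ j ∈ Finset.range i, (θ j - θ (d - j)) / (θ 0 - θ d)) +
        (θs i - θs 0) * (θ (d - i + 1) - θ 0)) ∧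
    (∃ β : K, ∀ i : ℕ, 2 ≤ i → i ≤ d - 1 →
      (θ (i - 2) - θ (i + 1)) / (θ (i - 1) - θ i) = β ∧
      (θs (i - 2) - θs (i + 1)) / (θs (i - 1) - θs i) = β) := by
  have hz : ∀ n : ℕ, q ^ n ≠ 0 := fun n => pow_ne_zero n hq
  have hθ' : ∀ i : ℕ, i ≤ d → θ i = (q ^ i)⁻¹ := by
    intro i hi
    rw [hθ i hi, zpow_neg, zpow_natCast]
  have hθs' : ∀ i : ℕ, i ≤ d → θs i = (q ^ i)⁻¹ + ss * (q ^ i * q) := by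
    intro i hi
    rw [hθs i hi, zpow_neg, zpow_add₀ hq, zpow_natCast, zpow_one]
  have hθd : ∀ j : ℕ, j ≤ d → θ (d - j) = q ^ j / q ^ d := by
    intro j hj
    rw [hθ' _ (Nat.sub_le _ _)]
    have := hz (d - j)
    have := hz d
    field_simp
    rw [← pow_add]
    congr 1
    omega
  have hφ' : ∀ i : ℕ, 1 ≤ i → i ≤ d →
      φ i = (q ^ i - 1) * (q / q ^ i - 1 / q ^ d) * (r - 1 / q ^ i) := by
    intro i h1 hi
    rw [hφ i h1 hi, zpow_sub₀ hq, zpow_sub₀ hq, zpow_sub₀ hq, two_mul, zpow_add₀ hq,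
      zpow_natCast, zpow_natCast, zpow_one]
    have := hz i
    have := hz d
    field_simp
    ring
  have hϕ' : ∀ i : ℕ, 1 ≤ i → i ≤ d →
      ϕ i = (q ^ i - 1) * (q / q ^ i - 1 / q ^ d) * (r - ss * q ^ i) := by
    intro i h1 hi
    rw [hϕ i h1 hi, zpow_sub₀ hq, zpow_sub₀ hq, zpow_sub₀ hq,
      zpow_natCast, zpow_natCast, zpow_one]
    have := hz i
    have := hz d
    field_simp
    ring
  have hsum : ∀ i : ℕ, i ≤ d →
      (q - 1) * ∑ j ∈ Finset.range i, (θ j - θ (d - j)) =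
        (q ^ i - 1) * (q / q ^ i - 1 / q ^ d) := by
    intro i
    induction i with
    | zero => intro _; simp
    | succ n ih =>
      intro hn
      rw [Finset.sum_range_succ, mul_add, ih (by omega), hθ' n (by omega), hθd n (by omega)]
      have := hz n
      have := hz d
      rw [pow_succ]
      field_simp
      ring
  have hS : 1 ≤ d → ∀ i : ℕ, i ≤ d →
      (q - 1) * (1 - 1 / q ^ d) * (∑ j ∈ Finset.range i, (θ j - θ (d - j)) / (θ 0 - θ d)) =
        (q ^ i - 1) * (q / q ^ i - 1 / q ^ d) := by
    intro hd i hi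
    have h0 : θ 0 - θ d ≠ 0 := sub_ne_zero.2 (hPA1 0 d (by omega) le_rfl).1
    have e : θ 0 - θ d = 1 - 1 / q ^ d := by
      rw [hθ' 0 (by omega), hθ' d le_rfl]; simp
    rw [← Finset.sum_div, ← hsum i hi, ← e]
    field_simp
  refine ⟨?_, ?_, q + 1 + q⁻¹, ?_⟩
  · intro i h1 hi
    have hs := hS (by omega) i hi
    set S := ∑ j ∈ Finset.range i, (θ j - θ (d - j)) / (θ 0 - θ d)
    have e1 : ϕ 1 = (q - 1) * (1 - 1 / q ^ d) * (r - ss * q) := by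
      rw [hϕ' 1 le_rfl (by omega), pow_one, div_self hq]
    have e2 : θ (i - 1) = q / q ^ i := by
      obtain ⟨k, rfl⟩ : ∃ k, i = k + 1 := ⟨i - 1, by omega⟩
      rw [hθ' _ (by omega), Nat.add_sub_cancel, pow_succ]
      have := hz k
      field_simp
    rw [e1, e2, hφ' i h1 hi, hθs' i hi, hθs' 0 (by omega), hθ' d le_rfl]
    have e4 : (q - 1) * (1 - 1 / q ^ d) * (r - ss * q) * S =
        (r - ss * q) * ((q ^ i - 1) * (q / q ^ i - 1 / q ^ d)) := by
      rw [← hs]; ring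
    rw [e4]
    have := hz i
    have := hz d
    simp only [pow_zero, inv_one]
    field_simp
    ring
  · intro i h1 hi
    have hs := hS (by omega) i hi
    set S := ∑ j ∈ Finset.range i, (θ j - θ (d - j)) / (θ 0 - θ d)
    have e1 : φ 1 = (q - 1) * (1 - 1 / q ^ d) * (r - 1 / q) := by
      rw [hφ' 1 le_rfl (by omega), pow_one, div_self hq]
    have e2 : θ (d - i + 1) = q ^ i / (q * q ^ d) := by
      have h : d - i + 1 = d - (i - 1) := by omega
      rw [h, hθd _ (by omega)]
      obtain ⟨k, rfl⟩ : ∃ k, i = k + 1 := ⟨i - 1, by omega⟩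
      have := hz d
      rw [Nat.add_sub_cancel, pow_succ]
      field_simp
    have e4 : φ 1 * S = (r - 1 / q) * ((q ^ i - 1) * (q / q ^ i - 1 / q ^ d)) := by
      rw [e1, ← hs]; ring
    rw [e4, e2, hϕ' i h1 hi, hθs' i hi, hθs' 0 (by omega), hθ' 0 (by omega)]
    have := hz i
    have := hz d
    simp only [pow_zero, inv_one]
    field_simp
    ring
  · intro i h2 hi
    obtain ⟨k, rfl⟩ : ∃ k, i = k + 2 := ⟨i - 2, by omega⟩
    have hne := hPA1 (k + 1) (k + 2) (by omega) (by omega)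
    have e1 : k + 2 - 2 = k := by omega
    have e2 : k + 2 - 1 = k + 1 := by omega
    rw [e1, e2]
    have hk := hz k
    constructor
    · rw [div_eq_iff (sub_ne_zero.2 hne.1), hθ' k (by omega), hθ' (k + 1) (by omega),
        hθ' (k + 2) (by omega), hθ' (k + 2 + 1) (by omega)]
      simp only [pow_succ]
      field_simp
      ring
    · rw [div_eq_iff (sub_ne_zero.2 hne.2), hθs' k (by omega), hθs' (k + 1) (by omega),
        hθs' (k + 2) (by omega), hθs' (k + 2 + 1) (by omega)]
      simp only [pow_succ]
      field_simp
      ring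
end

section
/- (Dual q-Hahn parameter array.) Let d be a non-negative integer and let q, s, r be nonzero scalars in K. Define, for 0 ≤ i ≤ d, θ_i = q^{−i} + s·q^{i+1} and θ*_i = q^{−i}, and, for 1 ≤ i ≤ d, φ_i = q^{1−2i}·(1 − q^i)(1 − q^{i−d−1})(1 − r·q^i) and ϕ_i = q^{d+2−2i}·(1 − q^i)(1 − q^{i−d−1})(s − r·q^{i−d−1}). Assume θ_i ≠ θ_j and θ*_i ≠ θ*_j for 0 ≤ i < j ≤ d, and φ_i ≠ 0 and ϕ_i ≠ 0 for 1 ≤ i ≤ d. Then (θ_0,…,θ_d; θ*_0,…,θ*_d; φ_1,…,φ_d; ϕ_1,…,ϕ_d) is a parameter array over K of diameter d, i.e., conditions PA3, PA4 and PA5 also hold. -/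
theorem aux_sum {K : Type*} [Field K] (d : ℕ) (q : K) (hq : q ≠ 0) (i : ℕ) :
    (1 - q) * ∑ j ∈ Finset.range i, ((q ^ j)⁻¹ - q ^ j / q ^ d) =
      (1 - q ^ i) * (1 - q ^ i / (q ^ d * q)) * (q / q ^ i) := by
  induction i with
  | zero => simp
  | succ n ih =>
    rw [Finset.sum_range_succ, mul_add, ih, pow_succ]
    have h1 : q ^ n ≠ 0 := pow_ne_zero _ hq
    have h2 : q ^ d ≠ 0 := pow_ne_zero _ hq
    field_simp
    ring

/-- The dual q-Hahn data forms a parameter array: PA3, PA4 and PA5 hold. -/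
theorem dual_qHahn_parameter_array
    {K : Type*} [Field K] [IsAlgClosed K] (hchar : ringChar K ≠ 2)
    (d : ℕ) (q s r : K) (hq : q ≠ 0) (hs : s ≠ 0) (hr : r ≠ 0)
    (θ θs φ ϕ : ℕ → K)
    (hθ : ∀ i : ℕ, i ≤ d → θ i = q ^ (-(i : ℤ)) + s * q ^ ((i : ℤ) + 1))
    (hθs : ∀ i : ℕ, i ≤ d → θs i = q ^ (-(i : ℤ)))
    (hφ : ∀ i : ℕ, 1 ≤ i → i ≤ d →
      φ i = q ^ (1 - 2 * (i : ℤ)) *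
        (1 - q ^ (i : ℤ)) * (1 - q ^ ((i : ℤ) - d - 1)) * (1 - r * q ^ (i : ℤ)))
    (hϕ : ∀ i : ℕ, 1 ≤ i → i ≤ d →
      ϕ i = q ^ ((d : ℤ) + 2 - 2 * i) *
        (1 - q ^ (i : ℤ)) * (1 - q ^ ((i : ℤ) - d - 1)) * (s - r * q ^ ((i : ℤ) - d - 1)))
    (hPA1 : ∀ i j : ℕ, i < j → j ≤ d → θ i ≠ θ j ∧ θs i ≠ θs j)
    (hPA2 : ∀ i : ℕ, 1 ≤ i → i ≤ d → φ i ≠ 0 ∧ ϕ i ≠ 0) :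
    (∀ i : ℕ, 1 ≤ i → i ≤ d →
      φ i = ϕ 1 * (∑ j ∈ Finset.range i, (θ j - θ (d - j)) / (θ 0 - θ d)) +
        (θs i - θs 0) * (θ (i - 1) - θ d)) ∧
    (∀ i : ℕ, 1 ≤ i → i ≤ d →
      ϕ i = φ 1 * (∑ j ∈ Finset.range i, (θ j - θ (d - j)) / (θ 0 - θ d)) +
        (θs i - θs 0) * (θ (d - i + 1) - θ 0)) ∧
    (∃ β : K, ∀ i : ℕ, 2 ≤ i → i ≤ d - 1 →
      (θ (i - 2) - θ (i + 1)) / (θ (i - 1) - θ i) = β ∧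
      (θs (i - 2) - θs (i + 1)) / (θs (i - 1) - θs i) = β) := by
  have hθ' : ∀ i : ℕ, i ≤ d → θ i = (q ^ i)⁻¹ + s * (q ^ i * q) := by
    intro i hi
    rw [hθ i hi, zpow_neg, zpow_add₀ hq, zpow_natCast, zpow_one]
  have hθs' : ∀ i : ℕ, i ≤ d → θs i = (q ^ i)⁻¹ := by
    intro i hi
    rw [hθs i hi, zpow_neg, zpow_natCast]
  have hz : ∀ i : ℕ, q ^ ((i : ℤ) - d - 1) = q ^ i / (q ^ d * q) := by
    intro i
    rw [zpow_sub₀ hq, zpow_sub₀ hq, zpow_natCast, zpow_natCast, zpow_one, div_div]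
  have hz2 : ∀ i : ℕ, q ^ (2 * (i : ℤ)) = q ^ i * q ^ i := by
    intro i
    rw [two_mul, zpow_add₀ hq, zpow_natCast]
  have hφ' : ∀ i : ℕ, 1 ≤ i → i ≤ d → φ i = q / (q ^ i * q ^ i) *
        (1 - q ^ i) * (1 - q ^ i / (q ^ d * q)) * (1 - r * q ^ i) := by
    intro i h1 h2
    rw [hφ i h1 h2, hz, zpow_sub₀ hq, hz2, zpow_one, zpow_natCast]
  have hϕ' : ∀ i : ℕ, 1 ≤ i → i ≤ d → ϕ i = q ^ d * q ^ 2 / (q ^ i * q ^ i) *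
        (1 - q ^ i) * (1 - q ^ i / (q ^ d * q)) * (s - r * (q ^ i / (q ^ d * q))) := by
    intro i h1 h2
    rw [hϕ i h1 h2, hz, zpow_sub₀ hq, hz2, zpow_add₀ hq, zpow_natCast, zpow_natCast]
    norm_cast
  have hD : q ^ d ≠ 0 := pow_ne_zero _ hq
  have key : ∀ i : ℕ, 1 ≤ i → i ≤ d →
      (1 - q) ≠ 0 ∧ (q ^ d - 1) ≠ 0 ∧
      (∑ j ∈ Finset.range i, (θ j - θ (d - j)) / (θ 0 - θ d)) =
        (1 - q ^ i) * (1 - q ^ i / (q ^ d * q)) * (q / q ^ i) /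
          ((1 - q) * (1 - (q ^ d)⁻¹)) := by
    intro i h1 h2
    have e0 : θ 0 - θ d = (1 - (q ^ d)⁻¹) * (1 - s * (q ^ d * q)) := by
      rw [hθ' 0 (by omega), hθ' d le_rfl]
      field_simp
      ring
    have n0 : θ 0 - θ d ≠ 0 := sub_ne_zero.2 (hPA1 0 d (by omega) le_rfl).1
    rw [e0] at n0
    have nA := left_ne_zero_of_mul n0
    have nB := right_ne_zero_of_mul n0
    have n1 : 1 - q ≠ 0 := by
      intro h
      apply (hPA1 0 1 (by omega) (by omega)).2
      rw [hθs' 0 (by omega), hθs' 1 (by omega), ← sub_eq_zero.1 h]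
      simp
    refine ⟨n1, ?_, ?_⟩
    · intro h
      apply nA
      rw [sub_eq_zero.1 h]
      simp
    · rw [← aux_sum d q hq i, mul_div_mul_left _ _ n1, Finset.sum_div]
      apply Finset.sum_congr rfl
      intro j hj
      have hj := Finset.mem_range.1 hj
      rw [e0, div_eq_div_iff n0 nA, hθ' j (by omega), hθ' (d - j) (by omega)]
      have hp : q ^ j ≠ 0 := pow_ne_zero _ hq
      rw [pow_sub₀ _ hq (by omega : j ≤ d)]
      generalize (1 - (q ^ d)⁻¹) = A
      field_simp
      ring
  refine ⟨?_, ?_, q + 1 + q⁻¹, ?_⟩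
  · intro i h1 h2
    obtain ⟨n1, nA, hS⟩ := key i h1 h2
    rw [hS, hφ' i h1 h2, hϕ' 1 le_rfl (by omega), hθs' i h2, hθs' 0 (by omega),
      hθ' (i - 1) (by omega), hθ' d le_rfl]
    obtain ⟨n, rfl⟩ : ∃ n, i = n + 1 := ⟨i - 1, by omega⟩
    rw [Nat.add_sub_cancel, pow_succ, pow_one, pow_zero]
    have hp : q ^ n ≠ 0 := pow_ne_zero _ hq
    generalize q ^ n = a at *
    generalize q ^ d = D at *
    field_simp
    ring
  · intro i h1 h2
    obtain ⟨n1, nA, hS⟩ := key i h1 h2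
    rw [hS, hϕ' i h1 h2, hφ' 1 le_rfl (by omega), hθs' i h2, hθs' 0 (by omega),
      hθ' (d - i + 1) (by omega), hθ' 0 (by omega), pow_succ q (d - i), pow_sub₀ _ hq h2]
    rw [pow_one, pow_zero]
    have hp : q ^ i ≠ 0 := pow_ne_zero _ hq
    generalize q ^ i = a at *
    generalize q ^ d = D at *
    field_simp
    ring
  · intro i h1 h2
    obtain ⟨n, rfl⟩ : ∃ n, i = n + 2 := ⟨i - 2, by omega⟩
    obtain ⟨m1, m2⟩ := hPA1 (n + 1) (n + 2) (by omega) (by omega)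
    have hp : q ^ n ≠ 0 := pow_ne_zero _ hq
    have e1 : n + 2 - 2 = n := by omega
    have e2 : n + 2 - 1 = n + 1 := by omega
    rw [e1, e2, div_eq_iff (sub_ne_zero.2 m1), div_eq_iff (sub_ne_zero.2 m2),
      hθ' n (by omega), hθ' (n + 1) (by omega), hθ' (n + 2) (by omega),
      hθ' (n + 2 + 1) (by omega),
      hθs' n (by omega), hθs' (n + 1) (by omega), hθs' (n + 2) (by omega),
      hθs' (n + 2 + 1) (by omega)]
    simp only [pow_succ]
    constructor
    · field_simp
      ring
    · field_simp
      ring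
end

section
/- (q-Krawtchouk parameter array.) Let d be a non-negative integer and let q, s* be nonzero scalars in K. Define, for 0 ≤ i ≤ d, θ_i = q^{−i} and θ*_i = q^{−i} + s*·q^{i+1}, and, for 1 ≤ i ≤ d, φ_i = q^{1−2i}·(1 − q^i)(1 − q^{i−d−1}) and ϕ_i = s*·q·(1 − q^i)(1 − q^{i−d−1}). Assume θ_i ≠ θ_j and θ*_i ≠ θ*_j for 0 ≤ i < j ≤ d, and φ_i ≠ 0 and ϕ_i ≠ 0 for 1 ≤ i ≤ d. Then (θ_0,…,θ_d; θ*_0,…,θ*_d; φ_1,…,φ_d; ϕ_1,…,ϕ_d) is a parameter array over K of diameter d, i.e., conditions PA3, PA4 and PA5 also hold. -/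
/-- The q-Krawtchouk data forms a parameter array: PA3, PA4 and PA5 hold. -/
theorem qKrawtchouk_parameter_array
    {K : Type*} [Field K] [IsAlgClosed K] (hchar : ringChar K ≠ 2)
    (d : ℕ) (q ss : K) (hq : q ≠ 0) (hss : ss ≠ 0)
    (θ θs φ ϕ : ℕ → K)
    (hθ : ∀ i : ℕ, i ≤ d → θ i = q ^ (-(i : ℤ)))
    (hθs : ∀ i : ℕ, i ≤ d → θs i = q ^ (-(i : ℤ)) + ss * q ^ ((i : ℤ) + 1))
    (hφ : ∀ i : ℕ, 1 ≤ i → i ≤ d →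
      φ i = q ^ (1 - 2 * (i : ℤ)) * (1 - q ^ (i : ℤ)) * (1 - q ^ ((i : ℤ) - d - 1)))
    (hϕ : ∀ i : ℕ, 1 ≤ i → i ≤ d →
      ϕ i = ss * q * (1 - q ^ (i : ℤ)) * (1 - q ^ ((i : ℤ) - d - 1)))
    (hPA1 : ∀ i j : ℕ, i < j → j ≤ d → θ i ≠ θ j ∧ θs i ≠ θs j)
    (hPA2 : ∀ i : ℕ, 1 ≤ i → i ≤ d → φ i ≠ 0 ∧ ϕ i ≠ 0) :
    (∀ i : ℕ, 1 ≤ i → i ≤ d →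
      φ i = ϕ 1 * (∑ j ∈ Finset.range i, (θ j - θ (d - j)) / (θ 0 - θ d)) +
        (θs i - θs 0) * (θ (i - 1) - θ d)) ∧
    (∀ i : ℕ, 1 ≤ i → i ≤ d →
      ϕ i = φ 1 * (∑ j ∈ Finset.range i, (θ j - θ (d - j)) / (θ 0 - θ d)) +
        (θs i - θs 0) * (θ (d - i + 1) - θ 0)) ∧
    (∃ β : K, ∀ i : ℕ, 2 ≤ i → i ≤ d - 1 →
      (θ (i - 2) - θ (i + 1)) / (θ (i - 1) - θ i) = β ∧
      (θs (i - 2) - θs (i + 1)) / (θs (i - 1) - θs i) = β) := by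
  have T : ∀ i : ℕ, i ≤ d → θ i = (q ^ i)⁻¹ := fun i hi => by
    rw [hθ i hi, zpow_neg, zpow_natCast]
  have Td : ∀ i : ℕ, i ≤ d → θ (d - i) = q ^ i * (q ^ d)⁻¹ := fun i hi => by
    rw [T _ (Nat.sub_le _ _), pow_sub₀ q hq hi, mul_inv, inv_inv, mul_comm]
  have Ts : ∀ i : ℕ, i ≤ d → θs i = (q ^ i)⁻¹ + ss * (q ^ i * q) := fun i hi => by
    rw [hθs i hi, zpow_neg, zpow_natCast, zpow_add₀ hq, zpow_natCast, zpow_one]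
  have E : ∀ i : ℕ, q ^ ((i : ℤ) - d - 1) = q ^ i * (q ^ d)⁻¹ * q⁻¹ := fun i => by
    rw [zpow_sub₀ hq, zpow_sub₀ hq, zpow_natCast, zpow_natCast, zpow_one]
    simp only [div_eq_mul_inv]
  have F : ∀ i : ℕ, q ^ (1 - 2 * (i : ℤ)) = q * (q ^ i)⁻¹ * (q ^ i)⁻¹ := fun i => by
    rw [two_mul, zpow_sub₀ hq, zpow_add₀ hq, zpow_natCast, zpow_one]
    simp only [div_eq_mul_inv, mul_inv, mul_assoc]
  have P : ∀ i : ℕ, 1 ≤ i → i ≤ d → φ i = q * (q ^ i)⁻¹ * (q ^ i)⁻¹ * (1 - q ^ i) *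
      (1 - q ^ i * (q ^ d)⁻¹ * q⁻¹) := fun i h1 hi => by
    rw [hφ i h1 hi, E, F, zpow_natCast]
  have R : ∀ i : ℕ, 1 ≤ i → i ≤ d → ϕ i = ss * q * (1 - q ^ i) *
      (1 - q ^ i * (q ^ d)⁻¹ * q⁻¹) := fun i h1 hi => by
    rw [hϕ i h1 hi, E, zpow_natCast]
  have hD : q ^ d ≠ 0 := pow_ne_zero _ hq
  have S : ∀ i : ℕ, i ≤ d → (1 - q) * ∑ j ∈ Finset.range i, (θ j - θ (d - j)) =
      (1 - q ^ i) * (q * (q ^ i)⁻¹ - (q ^ d)⁻¹) := by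
    intro i
    induction i with
    | zero => intro _; simp
    | succ k ih =>
      intro hk
      have hQ : q ^ k ≠ 0 := pow_ne_zero _ hq
      rw [Finset.sum_range_succ, mul_add, ih (by omega), T k (by omega), Td k (by omega),
        pow_succ]
      generalize q ^ k = Q at *
      generalize q ^ d = D at *
      field_simp
      ring
  have N : ∀ i : ℕ, 1 ≤ i → i ≤ d → (1 - q) * (1 - (q ^ d)⁻¹) *
      (∑ j ∈ Finset.range i, (θ j - θ (d - j)) / (θ 0 - θ d)) =
      (1 - q ^ i) * (q * (q ^ i)⁻¹ - (q ^ d)⁻¹) := by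
    intro i h1 hi
    have h0 := sub_ne_zero.mpr (hPA1 0 d (by omega) le_rfl).1
    have e : 1 - (q ^ d)⁻¹ = θ 0 - θ d := by rw [T 0 (by omega), T d le_rfl]; simp
    rw [e, ← Finset.sum_div, ← S i hi]
    field_simp
  refine ⟨?_, ?_, q + 1 + q⁻¹, ?_⟩
  · intro i h1 hi
    have n := N i h1 hi
    have hϕ1 : ϕ 1 = ss * q * ((1 - q) * (1 - (q ^ d)⁻¹)) := by
      rw [R 1 le_rfl (by omega), pow_one]; field_simp
    rw [hϕ1, mul_assoc (ss * q), n, P i h1 hi, Ts i hi, Ts 0 (by omega), T d le_rfl,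
      T (i - 1) (by omega)]
    obtain ⟨k, rfl⟩ : ∃ k, i = k + 1 := ⟨i - 1, by omega⟩
    have hQ : q ^ k ≠ 0 := pow_ne_zero _ hq
    simp only [Nat.add_sub_cancel, pow_succ, pow_zero]
    clear n hϕ1 N S
    generalize q ^ k = Q at *
    generalize q ^ d = D at *
    field_simp
    ring
  · intro i h1 hi
    have n := N i h1 hi
    have hφ1 : φ 1 = q⁻¹ * ((1 - q) * (1 - (q ^ d)⁻¹)) := by
      rw [P 1 le_rfl (by omega), pow_one]; field_simp
    have hd : d - i + 1 = d - (i - 1) := by omega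
    rw [hφ1, mul_assoc q⁻¹, n, R i h1 hi, Ts i hi, Ts 0 (by omega), T 0 (by omega), hd,
      Td (i - 1) (by omega)]
    obtain ⟨k, rfl⟩ : ∃ k, i = k + 1 := ⟨i - 1, by omega⟩
    have hQ : q ^ k ≠ 0 := pow_ne_zero _ hq
    simp only [Nat.add_sub_cancel, pow_succ, pow_zero]
    clear n hφ1 N S
    generalize q ^ k = Q at *
    generalize q ^ d = D at *
    field_simp
    ring
  · intro i h2 hi
    obtain ⟨h, hs⟩ := hPA1 (i - 1) i (by omega) (by omega)
    rw [div_eq_iff (sub_ne_zero.mpr h), div_eq_iff (sub_ne_zero.mpr hs)]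
    rw [T (i - 2) (by omega), T (i + 1) (by omega), T (i - 1) (by omega), T i (by omega),
      Ts (i - 2) (by omega), Ts (i + 1) (by omega), Ts (i - 1) (by omega), Ts i (by omega)]
    obtain ⟨k, rfl⟩ : ∃ k, i = k + 2 := ⟨i - 2, by omega⟩
    have hQ : q ^ k ≠ 0 := pow_ne_zero _ hq
    have e1 : k + 2 - 1 = k + 1 := by omega
    simp only [Nat.add_sub_cancel, e1, pow_succ]
    clear N S h hs
    generalize q ^ k = Q at *
    constructor <;> field_simp <;> ring
end

section
/- (Quantum q-Krawtchouk parameter array.) Let d be a non-negative integer and let q, r be nonzero scalars in K. Define, for 0 ≤ i ≤ d, θ_i = q^{i+1} and θ*_i = q^{−i}, and, for 1 ≤ i ≤ d, φ_i = −r·q^{1−i}·(1 − q^i)(1 − q^{i−d−1}) and ϕ_i = q^{d+2−2i}·(1 − q^i)(1 − q^{i−d−1})(1 − r·q^{i−d−1}). Assume θ_i ≠ θ_j and θ*_i ≠ θ*_j for 0 ≤ i < j ≤ d, and φ_i ≠ 0 and ϕ_i ≠ 0 for 1 ≤ i ≤ d. Then (θ_0,…,θ_d; θ*_0,…,θ*_d;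 φ_1,…,φ_d; ϕ_1,…,ϕ_d) is a parameter array over K of diameter d, i.e., conditions PA3, PA4 and PA5 also hold. -/
/-- The quantum q-Krawtchouk data forms a parameter array: PA3, PA4 and PA5 hold. -/
theorem quantum_qKrawtchouk_parameter_array
    {K : Type*} [Field K] [IsAlgClosed K] (hchar : ringChar K ≠ 2)
    (d : ℕ) (q r : K) (hq : q ≠ 0) (hr : r ≠ 0)
    (θ θs φ ϕ : ℕ → K)
    (hθ : ∀ i : ℕ, i ≤ d → θ i = q ^ ((i : ℤ) + 1))
    (hθs : ∀ i : ℕ, i ≤ d → θs i = q ^ (-(i : ℤ)))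
    (hφ : ∀ i : ℕ, 1 ≤ i → i ≤ d →
      φ i = -r * q ^ (1 - (i : ℤ)) * (1 - q ^ (i : ℤ)) * (1 - q ^ ((i : ℤ) - d - 1)))
    (hϕ : ∀ i : ℕ, 1 ≤ i → i ≤ d →
      ϕ i = q ^ ((d : ℤ) + 2 - 2 * i) *
        (1 - q ^ (i : ℤ)) * (1 - q ^ ((i : ℤ) - d - 1)) * (1 - r * q ^ ((i : ℤ) - d - 1)))
    (hPA1 : ∀ i j : ℕ, i < j → j ≤ d → θ i ≠ θ j ∧ θs i ≠ θs j)
    (hPA2 : ∀ i : ℕ, 1 ≤ i → i ≤ d → φ i ≠ 0 ∧ ϕ i ≠ 0) :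
    (∀ i : ℕ, 1 ≤ i → i ≤ d →
      φ i = ϕ 1 * (∑ j ∈ Finset.range i, (θ j - θ (d - j)) / (θ 0 - θ d)) +
        (θs i - θs 0) * (θ (i - 1) - θ d)) ∧
    (∀ i : ℕ, 1 ≤ i → i ≤ d →
      ϕ i = φ 1 * (∑ j ∈ Finset.range i, (θ j - θ (d - j)) / (θ 0 - θ d)) +
        (θs i - θs 0) * (θ (d - i + 1) - θ 0)) ∧
    (∃ β : K, ∀ i : ℕ, 2 ≤ i → i ≤ d - 1 →
      (θ (i - 2) - θ (i + 1)) / (θ (i - 1) - θ i) = β ∧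
      (θs (i - 2) - θs (i + 1)) / (θs (i - 1) - θs i) = β) := by
  have hsum : ∀ n : ℕ, n ≤ d → (∑ j ∈ Finset.range n, (θ j - θ (d - j))) * (1 - q)
      = q * (1 - q ^ (n : ℤ)) * (1 - q ^ ((d : ℤ) + 1 - n)) := by
    intro n
    induction n with
    | zero => intro _; simp
    | succ n ih =>
      intro hn
      rw [Finset.sum_range_succ, add_mul, ih (by omega), hθ n (by omega), hθ (d - n) (by omega)]
      obtain ⟨k, rfl⟩ := Nat.exists_eq_add_of_le hn
      have e1 : ((n + 1 + k - n : ℕ) : ℤ) + 1 = ((k + 2 : ℕ) : ℤ) := by omega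
      have e2 : ((n + 1 + k : ℕ) : ℤ) + 1 - (n : ℕ) = ((k + 2 : ℕ) : ℤ) := by omega
      have e3 : ((n + 1 + k : ℕ) : ℤ) + 1 - ((n + 1 : ℕ) : ℤ) = ((k + 1 : ℕ) : ℤ) := by omega
      have e4 : (n : ℤ) + 1 = ((n + 1 : ℕ) : ℤ) := by omega
      rw [e1, e2, e3, e4]
      simp only [zpow_natCast]
      ring
  have hdiv : ∀ i : ℕ, 1 ≤ i → i ≤ d →
      1 - q ≠ 0 ∧ 1 - q ^ d ≠ 0 ∧ (∑ j ∈ Finset.range i, (θ j - θ (d - j)) / (θ 0 - θ d))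
        = (1 - q ^ (i : ℤ)) * (1 - q ^ ((d : ℤ) + 1 - i)) / ((1 - q) * (1 - q ^ d)) := by
    intro i h1 h2
    have a1 : 1 - q ≠ 0 := by
      intro h
      have := (hPA1 0 1 (by omega) (by omega)).1
      rw [hθ 0 (by omega), hθ 1 (by omega)] at this
      have hq1 : q = 1 := (sub_eq_zero.mp h).symm
      simp [hq1] at this
    have e : θ 0 - θ d = q * (1 - q ^ d) := by
      rw [hθ 0 (by omega), hθ d le_rfl]
      simp only [zpow_add₀ hq, zpow_natCast, pow_zero, one_mul, zpow_one]
      ring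
    have a2 : 1 - q ^ d ≠ 0 := by
      intro h
      have := (hPA1 0 d (by omega) le_rfl).1
      rw [h, mul_zero] at e
      exact this (sub_eq_zero.mp e)
    refine ⟨a1, a2, ?_⟩
    rw [← Finset.sum_div, e, div_eq_div_iff (mul_ne_zero hq a2) (mul_ne_zero a1 a2)]
    linear_combination (1 - q ^ d) * hsum i h2
  refine ⟨?_, ?_, q + 1 + q⁻¹, ?_⟩
  · intro i h1 h2
    obtain ⟨a1, a2, e⟩ := hdiv i h1 h2
    rw [e, hφ i h1 h2, hϕ 1 le_rfl (by omega), hθs i h2, hθs 0 (by omega),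
      hθ (i - 1) (by omega), hθ d le_rfl]
    obtain ⟨m, rfl⟩ := Nat.exists_eq_add_of_le' h1
    obtain ⟨k, rfl⟩ := Nat.exists_eq_add_of_le h2
    simp only [Nat.add_sub_cancel]
    push_cast
    simp only [zpow_add₀ hq, zpow_sub₀ hq, zpow_neg, zpow_natCast, zpow_one, two_mul, mul_one,
      zpow_zero, neg_zero, pow_add, pow_one, zpow_ofNat] at a2 ⊢
    have hm : q ^ m ≠ 0 := pow_ne_zero _ hq
    have hk : q ^ k ≠ 0 := pow_ne_zero _ hq
    generalize q ^ m = x at *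
    generalize q ^ k = y at *
    have a3 : 1 - q * x * y ≠ 0 := by rwa [mul_comm q x]
    have a4 : 1 - x * y * q ≠ 0 := by rwa [mul_right_comm]
    have a5 : 1 - q * (x * y) ≠ 0 := by rwa [← mul_assoc]
    field_simp
    ring
  · intro i h1 h2
    obtain ⟨a1, a2, e⟩ := hdiv i h1 h2
    rw [e, hϕ i h1 h2, hφ 1 le_rfl (by omega), hθs i h2, hθs 0 (by omega),
      hθ (d - i + 1) (by omega), hθ 0 (by omega)]
    obtain ⟨m, rfl⟩ := Nat.exists_eq_add_of_le' h1
    obtain ⟨k, rfl⟩ := Nat.exists_eq_add_of_le h2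
    simp only [Nat.add_sub_cancel_left]
    push_cast
    simp only [zpow_add₀ hq, zpow_sub₀ hq, zpow_neg, zpow_natCast, zpow_one, two_mul, mul_one,
      zpow_zero, neg_zero, pow_add, pow_one, zpow_ofNat] at a2 ⊢
    have hm : q ^ m ≠ 0 := pow_ne_zero _ hq
    have hk : q ^ k ≠ 0 := pow_ne_zero _ hq
    generalize q ^ m = x at *
    generalize q ^ k = y at *
    have a3 : 1 - q * x * y ≠ 0 := by rwa [mul_comm q x]
    have a4 : 1 - x * y * q ≠ 0 := by rwa [mul_right_comm]
    have a5 : 1 - q * (x * y) ≠ 0 := by rwa [← mul_assoc]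
    field_simp
    ring
  · intro i h1 h2
    have hne := hPA1 (i - 1) i (by omega) (by omega)
    rw [div_eq_iff (sub_ne_zero.mpr hne.1), div_eq_iff (sub_ne_zero.mpr hne.2),
      hθ (i - 2) (by omega), hθ (i + 1) (by omega), hθ (i - 1) (by omega), hθ i (by omega),
      hθs (i - 2) (by omega), hθs (i + 1) (by omega), hθs (i - 1) (by omega), hθs i (by omega)]
    obtain ⟨m, rfl⟩ := Nat.exists_eq_add_of_le' h1
    have e1 : m + 2 - 2 = m := by omega
    have e2 : m + 2 - 1 = m + 1 := by omega
    rw [e1, e2]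
    push_cast
    have hm : q ^ m ≠ 0 := pow_ne_zero _ hq
    simp only [zpow_add₀ hq, zpow_neg, zpow_natCast, zpow_one, zpow_ofNat]
    generalize q ^ m = x at *
    constructor <;> field_simp <;> ring
end

section
/- (Askey–Wilson relations in the q-Racah case.) Let d be a non-negative integer and let q, s, s*, r be nonzero scalars in K. Define, for 0 ≤ i ≤ d, θ_i = s·q^{d−2i} + q^{2i−d}/s and θ*_i = s*·q^{d−2i} + q^{2i−d}/s*, and, for 1 ≤ i ≤ d, φ_i = (q^{2d+2−4i}/(s·s*·r))·(1 − q^{2i})(1 − q^{2i−2d−2})(s·s* − r·q^{2i−d−1})(s·s*·r − q^{2i−d−1}). Let (A, A*) be the associated split pair of (d+1)×(d+1) matrices. Put Q_j = q^j + q^{−j}, Q*_j = q^j − q^{−j}, S = s + 1/s, S* = s* + 1/s*, R = r + 1/r. Then (A, A*) satisfies the Askey–Wilson relations AW(Q_2, 0, 0, −(Q*_2)², −(Q*_2)², −(Q*_1)²·(S·S* + Q_{d+1}·R), Q_1·(Q*_1)²·(S·R + Q_{d+1}·S*), Q_1·(Q*_1)²·(S*·R + Q_{d+1}·S)). -/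
/-- A pair of square matrices satisfies the Askey–Wilson relations
`AW(β, γ, γs, ρ, ρs, ω, η, ηs)`. -/
def MatSatisfiesAW {K : Type*} [Field K] {n : ℕ}
    (A As : Matrix (Fin n) (Fin n) K) (β γ γs ρ ρs ω η ηs : K) : Prop :=
  A ^ 2 * As - β • (A * As * A) + As * A ^ 2 - γ • (A * As + As * A) - ρ • As =
      γs • (A ^ 2) + ω • A + η • (1 : Matrix (Fin n) (Fin n) K) ∧
  As ^ 2 * A - β • (As * A * As) + A * As ^ 2 - γs • (As * A + A * As) - ρs • A =
      γ • (As ^ 2) + ω • As + ηs • (1 : Matrix (Fin n) (Fin n) K)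

/-- The split pair of `(d+1) × (d+1)` matrices associated with data `θ, θs, φ`:
`A` is lower bidiagonal with diagonal `θ_0, …, θ_d` and subdiagonal entries `1`;
`As` is upper bidiagonal with diagonal `θs_0, …, θs_d` and superdiagonal entries
`φ_1, …, φ_d`. -/
def splitPair {K : Type*} [Field K] {d : ℕ} (θ θs φ : ℕ → K) :
    Matrix (Fin (d + 1)) (Fin (d + 1)) K × Matrix (Fin (d + 1)) (Fin (d + 1)) K :=
  (Matrix.of fun i j => if (i : ℕ) = j then θ i else if (j : ℕ) + 1 = i then 1 else 0,
   Matrix.of fun i j => if (i : ℕ) = j then θs i else if (i : ℕ) + 1 = j then φ j else 0)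

/-- Restriction of a bi-infinite sequence to indices `0..d`. -/
def awRes {K : Type*} (d : ℕ) (u : ℤ → K) : Fin (d + 1) → K := fun k => u ((k : ℕ) : ℤ)

/-- Bi-infinite lower bidiagonal operator. -/
def awLow {K : Type*} [Field K] (t : ℤ → K) (u : ℤ → K) : ℤ → K :=
  fun i => t i * u i + u (i - 1)

/-- Bi-infinite upper bidiagonal operator. -/
def awUp {K : Type*} [Field K] (t f : ℤ → K) (u : ℤ → K) : ℤ → K :=
  fun i => t i * u i + f (i + 1) * u (i + 1)

theorem awLow_neg {K : Type*} [Field K] (t u : ℤ → K) (hu : ∀ i < 0, u i = 0) :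
    ∀ i < 0, awLow t u i = 0 := by
  intro i hi
  simp [awLow, hu i hi, hu (i - 1) (by omega)]

theorem awUp_neg {K : Type*} [Field K] (t f u : ℤ → K) (hf : f 0 = 0)
    (hu : ∀ i < 0, u i = 0) : ∀ i < 0, awUp t f u i = 0 := by
  intro i hi
  rcases eq_or_ne i (-1) with rfl | h
  · simp [awUp, hu, hf]
  · simp [awUp, hu i hi, hu (i + 1) (by omega)]

theorem awLow_res {K : Type*} [Field K] (d : ℕ) (θ θs φ : ℕ → K) (t u : ℤ → K)
    (ht : ∀ i : ℕ, i ≤ d → θ i = t i) (hu : ∀ i < 0, u i = 0) :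
    (splitPair (d := d) θ θs φ).1.mulVec (awRes d u) = awRes d (awLow t u) := by
  ext ⟨k, hk⟩
  simp only [Matrix.mulVec, dotProduct, splitPair, Matrix.of_apply, awRes, awLow]
  rw [Fin.sum_univ_eq_sum_range
    (fun j => (if k = j then θ k else if j + 1 = k then 1 else 0) * u (j : ℤ)) (d + 1)]
  have h1 : ∀ j ∈ Finset.range (d + 1),
      (if k = j then θ k else if j + 1 = k then 1 else 0) * u (j : ℤ) =
      (if k = j then θ k * u (j : ℤ) else 0) + (if j + 1 = k then u (j : ℤ) else 0) := by
    intro j _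
    split_ifs <;> first | omega | simp
  rw [Finset.sum_congr rfl h1, Finset.sum_add_distrib, Finset.sum_ite_eq,
    if_pos (Finset.mem_range.2 hk), ht k (by omega)]
  congr 1
  rcases k with _ | k
  · simp [hu]
  · simp only [add_left_inj]
    rw [Finset.sum_ite_eq' , if_pos (Finset.mem_range.2 (by omega))]
    push_cast
    rw [add_sub_cancel_right]

theorem awUp_res {K : Type*} [Field K] (d : ℕ) (θ θs φ : ℕ → K) (t f u : ℤ → K)
    (ht : ∀ i : ℕ, i ≤ d → θs i = t i) (hf : ∀ i : ℕ, 1 ≤ i → i ≤ d → φ i = f i)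
    (hfd : f ((d : ℤ) + 1) = 0) :
    (splitPair (d := d) θ θs φ).2.mulVec (awRes d u) = awRes d (awUp t f u) := by
  ext ⟨k, hk⟩
  simp only [Matrix.mulVec, dotProduct, splitPair, Matrix.of_apply, awRes, awUp]
  rw [Fin.sum_univ_eq_sum_range
    (fun j => (if k = j then θs k else if k + 1 = j then φ j else 0) * u (j : ℤ)) (d + 1)]
  have h1 : ∀ j ∈ Finset.range (d + 1),
      (if k = j then θs k else if k + 1 = j then φ j else 0) * u (j : ℤ) =
      (if k = j then θs k * u (j : ℤ) else 0) + (if k + 1 = j then φ j * u (j : ℤ) else 0) := by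
    intro j _
    split_ifs <;> first | omega | simp
  rw [Finset.sum_congr rfl h1, Finset.sum_add_distrib, Finset.sum_ite_eq,
    if_pos (Finset.mem_range.2 hk), ht k (by omega), Finset.sum_ite_eq]
  congr 1
  by_cases h : k < d
  · rw [if_pos (Finset.mem_range.2 (by omega)), hf _ (by omega) (by omega)]
    push_cast
    rfl
  · have : k = d := by omega
    subst this
    simp [hfd]

/-- `θ` as a function of `y = q^(2i-d)`. -/
def awT {K : Type*} [Field K] (s y : K) : K := s / y + y / s

/-- `φ` as a function of `y = q^(2i-d)` and `D = q^d`. -/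
def awF {K : Type*} [Field K] (q s ss r D y : K) : K :=
  q ^ 2 / y ^ 2 / (s * ss * r) * (1 - y * D) * (1 - y / (D * q ^ 2)) *
    (s * ss - r * (y / q)) * (s * ss * r - y / q)

set_option linter.unusedSimpArgs false

theorem aw_rel1 {K : Type*} [Field K] (q s ss r D y : K)
    (hq : q ≠ 0) (hs : s ≠ 0) (hss : ss ≠ 0) (hr : r ≠ 0) (hD : D ≠ 0) (hy : y ≠ 0)
    (t ts f u : ℤ → K) (i : ℤ)
    (ht0 : t i = awT s y) (ht1 : t (i+1) = awT s (y*q^2)) (ht2 : t (i-1) = awT s (y/q^2))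
    (hs0 : ts i = awT ss y) (hs2 : ts (i-1) = awT ss (y/q^2)) (hs3 : ts (i-2) = awT ss (y/q^4))
    (hf0 : f i = awF q s ss r D y) (hf1 : f (i+1) = awF q s ss r D (y*q^2))
    (hf2 : f (i-1) = awF q s ss r D (y/q^2)) :
    awLow t (awLow t (awUp ts f u)) i - (q^2+(q^2)⁻¹) * awLow t (awUp ts f (awLow t u)) i
      + awUp ts f (awLow t (awLow t u)) i + (q^2-(q^2)⁻¹)^2 * awUp ts f u i =
    -(q-q⁻¹)^2 * ((s+1/s)*(ss+1/ss) + (D*q+(D*q)⁻¹)*(r+1/r)) * awLow t u i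
      + (q+q⁻¹)*(q-q⁻¹)^2*((s+1/s)*(r+1/r) + (D*q+(D*q)⁻¹)*(ss+1/ss)) * u i := by
  have e1 : i - 1 - 1 = i - 2 := by ring
  have e2 : i - 2 + 1 = i - 1 := by ring
  simp only [awLow, awUp, e1, e2, sub_add_cancel, add_sub_cancel_right]
  have c1 : ts (i-2) - (q^2+(q^2)⁻¹) * ts (i-1) + ts i = 0 := by
    simp only [ht0, ht1, ht2, hs0, hs2, hs3, hf0, hf1, hf2, awT, awF]; field_simp; ring
  have c2 : (t i + t (i-1)) * ts (i-1) + f (i-1)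
      - (q^2+(q^2)⁻¹) * (t i * ts i + t (i-1) * ts (i-1) + f i)
      + (t i + t (i-1)) * ts i + f (i+1)
      = -(q-q⁻¹)^2 * ((s+1/s)*(ss+1/ss) + (D*q+(D*q)⁻¹)*(r+1/r)) := by
    simp only [ht0, ht1, ht2, hs0, hs2, hs3, hf0, hf1, hf2, awT, awF]; field_simp; ring
  have c3 : t i ^ 2 * ts i + (t i + t (i-1)) * f i
      - (q^2+(q^2)⁻¹) * (t i * (ts i * t i + f (i+1)) + f i * t i)
      + ts i * t i ^ 2 + f (i+1) * (t (i+1) + t i) + (q^2-(q^2)⁻¹)^2 * ts i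
      = -(q-q⁻¹)^2 * ((s+1/s)*(ss+1/ss) + (D*q+(D*q)⁻¹)*(r+1/r)) * t i
      + (q+q⁻¹)*(q-q⁻¹)^2*((s+1/s)*(r+1/r) + (D*q+(D*q)⁻¹)*(ss+1/ss)) := by
    simp only [ht0, ht1, ht2, hs0, hs2, hs3, hf0, hf1, hf2, awT, awF]; field_simp; ring
  have c4 : t i ^ 2 - (q^2+(q^2)⁻¹) * (t i * t (i+1)) + t (i+1) ^ 2 + (q^2-(q^2)⁻¹)^2 = 0 := by
    simp only [ht0, ht1, ht2, hs0, hs2, hs3, hf0, hf1, hf2, awT, awF]; field_simp; ring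
  linear_combination c1 * u (i-2) + c2 * u (i-1) + c3 * u i + c4 * f (i+1) * u (i+1)

theorem aw_rel2 {K : Type*} [Field K] (q s ss r D y : K)
    (hq : q ≠ 0) (hs : s ≠ 0) (hss : ss ≠ 0) (hr : r ≠ 0) (hD : D ≠ 0) (hy : y ≠ 0)
    (t ts f u : ℤ → K) (i : ℤ)
    (ht0 : t i = awT s y) (ht1 : t (i+1) = awT s (y*q^2)) (ht2 : t (i+2) = awT s (y*q^4))
    (hs0 : ts i = awT ss y) (hs1 : ts (i+1) = awT ss (y*q^2)) (hs2 : ts (i-1) = awT ss (y/q^2))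
    (hf0 : f i = awF q s ss r D y) (hf1 : f (i+1) = awF q s ss r D (y*q^2))
    (hf2 : f (i+2) = awF q s ss r D (y*q^4)) :
    awUp ts f (awUp ts f (awLow t u)) i - (q^2+(q^2)⁻¹) * awUp ts f (awLow t (awUp ts f u)) i
      + awLow t (awUp ts f (awUp ts f u)) i + (q^2-(q^2)⁻¹)^2 * awLow t u i =
    -(q-q⁻¹)^2 * ((s+1/s)*(ss+1/ss) + (D*q+(D*q)⁻¹)*(r+1/r)) * awUp ts f u i
      + (q+q⁻¹)*(q-q⁻¹)^2*((ss+1/ss)*(r+1/r) + (D*q+(D*q)⁻¹)*(s+1/s)) * u i := by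
  have e1 : i + 1 + 1 = i + 2 := by ring
  have e2 : i + 2 - 1 = i + 1 := by ring
  simp only [awLow, awUp, e1, e2, sub_add_cancel, add_sub_cancel_right]
  have c1 : t i - (q^2+(q^2)⁻¹) * t (i+1) + t (i+2) = 0 := by
    simp only [ht0, ht1, ht2, hs0, hs2, hs1, hf0, hf1, hf2, awT, awF]; field_simp; ring
  have c2 : (ts i + ts (i+1)) * t (i+1) + f (i+2)
      - (q^2+(q^2)⁻¹) * (t i * ts i + t (i+1) * ts (i+1) + f (i+1))
      + (ts i + ts (i+1)) * t i + f i
      = -(q-q⁻¹)^2 * ((s+1/s)*(ss+1/ss) + (D*q+(D*q)⁻¹)*(r+1/r)) := by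
    simp only [ht0, ht1, ht2, hs0, hs2, hs1, hf0, hf1, hf2, awT, awF]; field_simp; ring
  have c3 : ts i ^ 2 * t i + (ts i + ts (i+1)) * f (i+1)
      - (q^2+(q^2)⁻¹) * (ts i * (ts i * t i + f i) + f (i+1) * ts i)
      + t i * ts i ^ 2 + f i * (ts (i-1) + ts i) + (q^2-(q^2)⁻¹)^2 * t i
      = -(q-q⁻¹)^2 * ((s+1/s)*(ss+1/ss) + (D*q+(D*q)⁻¹)*(r+1/r)) * ts i
      + (q+q⁻¹)*(q-q⁻¹)^2*((ss+1/ss)*(r+1/r) + (D*q+(D*q)⁻¹)*(s+1/s)) := by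
    simp only [ht0, ht1, ht2, hs0, hs2, hs1, hf0, hf1, hf2, awT, awF]; field_simp; ring
  have c4 : ts i ^ 2 - (q^2+(q^2)⁻¹) * (ts i * ts (i-1)) + ts (i-1) ^ 2
      + (q^2-(q^2)⁻¹)^2 = 0 := by
    simp only [ht0, ht1, ht2, hs0, hs2, hs1, hf0, hf1, hf2, awT, awF]; field_simp; ring
  linear_combination c1 * f (i+1) * f (i+2) * u (i+2) + c2 * f (i+1) * u (i+1)
    + c3 * u i + c4 * u (i-1)

/-- Askey–Wilson relations for the (alternative normalized) q-Racah split pair. -/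
theorem qRacah_askey_wilson
    {K : Type*} [Field K] [IsAlgClosed K] (hchar : ringChar K ≠ 2)
    (d : ℕ) (q s ss r : K) (hq : q ≠ 0) (hs : s ≠ 0) (hss : ss ≠ 0) (hr : r ≠ 0)
    (θ θs φ : ℕ → K)
    (hθ : ∀ i : ℕ, i ≤ d → θ i = s * q ^ ((d : ℤ) - 2 * i) + q ^ (2 * (i : ℤ) - d) / s)
    (hθs : ∀ i : ℕ, i ≤ d → θs i = ss * q ^ ((d : ℤ) - 2 * i) + q ^ (2 * (i : ℤ) - d) / ss)
    (hφ : ∀ i : ℕ, 1 ≤ i → i ≤ d →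
      φ i = q ^ (2 * (d : ℤ) + 2 - 4 * i) / (s * ss * r) *
        (1 - q ^ (2 * (i : ℤ))) * (1 - q ^ (2 * (i : ℤ) - 2 * d - 2)) *
        (s * ss - r * q ^ (2 * (i : ℤ) - d - 1)) * (s * ss * r - q ^ (2 * (i : ℤ) - d - 1)))
    (Q1 Q2 Qd1 Qs1 Qs2 S Ss R : K)
    (hQ1 : Q1 = q + q ^ (-1 : ℤ)) (hQ2 : Q2 = q ^ (2 : ℤ) + q ^ (-2 : ℤ))
    (hQd1 : Qd1 = q ^ ((d : ℤ) + 1) + q ^ (-((d : ℤ) + 1)))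
    (hQs1 : Qs1 = q - q ^ (-1 : ℤ)) (hQs2 : Qs2 = q ^ (2 : ℤ) - q ^ (-2 : ℤ))
    (hS : S = s + 1 / s) (hSs : Ss = ss + 1 / ss) (hR : R = r + 1 / r) :
    MatSatisfiesAW (splitPair (d := d) θ θs φ).1 (splitPair (d := d) θ θs φ).2
      Q2 0 0 (-Qs2 ^ 2) (-Qs2 ^ 2)
      (-Qs1 ^ 2 * (S * Ss + Qd1 * R))
      (Q1 * Qs1 ^ 2 * (S * R + Qd1 * Ss))
      (Q1 * Qs1 ^ 2 * (Ss * R + Qd1 * S)) := by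
  set t : ℤ → K := fun i => awT s (q ^ (2 * i - d)) with ht
  set ts : ℤ → K := fun i => awT ss (q ^ (2 * i - d)) with hts
  set f : ℤ → K := fun i => awF q s ss r (q ^ (d : ℤ)) (q ^ (2 * i - d)) with hf
  have p1 : ∀ i : ℤ, q ^ (2 * (i + 1) - d) = q ^ (2 * i - d) * q ^ 2 := fun i => by
    rw [← zpow_natCast, ← zpow_add₀ hq]; congr 1; push_cast; ring
  have p2 : ∀ i : ℤ, q ^ (2 * (i + 2) - d) = q ^ (2 * i - d) * q ^ 4 := fun i => by
    rw [← zpow_natCast, ← zpow_add₀ hq]; congr 1; push_cast; ring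
  have p3 : ∀ i : ℤ, q ^ (2 * (i - 1) - d) = q ^ (2 * i - d) / q ^ 2 := fun i => by
    rw [← zpow_natCast, ← zpow_sub₀ hq]; congr 1; push_cast; ring
  have p4 : ∀ i : ℤ, q ^ (2 * (i - 2) - d) = q ^ (2 * i - d) / q ^ 4 := fun i => by
    rw [← zpow_natCast, ← zpow_sub₀ hq]; congr 1; push_cast; ring
  have pm : ∀ i : ℤ, q ^ ((d : ℤ) - 2 * i) = (q ^ (2 * i - d))⁻¹ := fun i => by
    rw [← zpow_neg]; congr 1; ring
  have hD : q ^ (d : ℤ) ≠ 0 := zpow_ne_zero _ hq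
  have hy : ∀ i : ℤ, q ^ (2 * i - d) ≠ 0 := fun i => zpow_ne_zero _ hq
  have hf_zero : f 0 = 0 := by
    have : q ^ (2 * (0 : ℤ) - d) * q ^ (d : ℤ) = 1 := by
      rw [← zpow_add₀ hq]; simp
    simp only [hf, awF, this]; simp
  have hf_top : f ((d : ℤ) + 1) = 0 := by
    have : q ^ (2 * ((d : ℤ) + 1) - d) = q ^ (d : ℤ) * q ^ 2 := by
      rw [← zpow_natCast q 2, ← zpow_add₀ hq]; congr 1; push_cast; ring
    simp only [hf, awF, this]
    rw [div_self (mul_ne_zero hD (pow_ne_zero _ hq))]; simp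
  have hθ' : ∀ i : ℕ, i ≤ d → θ i = t i := fun i hi => by
    rw [hθ i hi, pm]; simp only [ht, awT]; ring
  have hθs' : ∀ i : ℕ, i ≤ d → θs i = ts i := fun i hi => by
    rw [hθs i hi, pm]; simp only [hts, awT]; ring
  have hφ' : ∀ i : ℕ, 1 ≤ i → i ≤ d → φ i = f i := fun i h1 hi => by
    have g1 : q ^ (2 * (d : ℤ) + 2 - 4 * i) = q ^ 2 / (q ^ (2 * (i : ℤ) - d)) ^ 2 := by
      rw [← zpow_natCast, ← zpow_natCast, ← zpow_mul, ← zpow_sub₀ hq]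
      congr 1; push_cast; ring
    have g2 : q ^ (2 * (i : ℤ)) = q ^ (2 * (i : ℤ) - d) * q ^ (d : ℤ) := by
      rw [← zpow_add₀ hq]; congr 1; ring
    have g3 : q ^ (2 * (i : ℤ) - 2 * d - 2) = q ^ (2 * (i : ℤ) - d) / (q ^ (d : ℤ) * q ^ 2) := by
      rw [← zpow_natCast q 2, ← zpow_add₀ hq, ← zpow_sub₀ hq]; congr 1; push_cast; ring
    have g4 : q ^ (2 * (i : ℤ) - d - 1) = q ^ (2 * (i : ℤ) - d) / q := by
      rw [zpow_sub_one₀ hq, div_eq_mul_inv]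
    rw [hφ i h1 hi, g1, g2, g3, g4]
    simp only [hf, awF]
  have hQ1' : Q1 = q + q⁻¹ := by rw [hQ1, zpow_neg_one]
  have hQs1' : Qs1 = q - q⁻¹ := by rw [hQs1, zpow_neg_one]
  have h2 : q ^ (2 : ℤ) = q ^ 2 := by norm_cast
  have hQ2' : Q2 = q ^ 2 + (q ^ 2)⁻¹ := by rw [hQ2, zpow_neg, h2]
  have hQs2' : Qs2 = q ^ 2 - (q ^ 2)⁻¹ := by rw [hQs2, zpow_neg, h2]
  have hQd' : Qd1 = q ^ (d : ℤ) * q + (q ^ (d : ℤ) * q)⁻¹ := by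
    rw [hQd1, zpow_neg, zpow_add_one₀ hq]
  have hA := fun u hu => awLow_res d θ θs φ t u hθ' hu
  have hB := fun u => awUp_res d θ θs φ ts f u hθs' hφ' hf_top
  have key1 := fun (u : ℤ → K) (i : ℤ) => aw_rel1 q s ss r (q ^ (d : ℤ)) (q ^ (2 * i - d))
    hq hs hss hr hD (hy i)
    t ts f u i rfl (by simp only [ht, p1]) (by simp only [ht, p3]) rfl (by simp only [hts, p3])
    (by simp only [hts, p4]) rfl (by simp only [hf, p1]) (by simp only [hf, p3])
  have key2 := fun (u : ℤ → K) (i : ℤ) => aw_rel2 q s ss r (q ^ (d : ℤ)) (q ^ (2 * i - d))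
    hq hs hss hr hD (hy i)
    t ts f u i rfl (by simp only [ht, p1]) (by simp only [ht, p2]) rfl (by simp only [hts, p1])
    (by simp only [hts, p3]) rfl (by simp only [hf, p1]) (by simp only [hf, p2])
  rw [hQ1', hQs1', hQ2', hQs2', hQd', hS, hSs, hR]
  generalize (splitPair (d := d) θ θs φ).1 = A at *
  generalize (splitPair (d := d) θ θs φ).2 = B at *
  have hL := awLow_neg (K := K) t
  have hU := fun u => awUp_neg (K := K) ts f u hf_zero
  have hext : ∀ w : Fin (d + 1) → K, ∃ u : ℤ → K, (∀ i < 0, u i = 0) ∧ w = awRes d u := by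
    intro w
    refine ⟨fun i => if h : 0 ≤ i ∧ i.toNat < d + 1 then w ⟨i.toNat, h.2⟩ else 0, ?_, ?_⟩
    · intro i hi
      simp [not_le.2 hi]
    · ext ⟨k, hk⟩
      simp [awRes, hk]
  constructor
  · apply Matrix.ext_of_mulVec_single
    intro j
    obtain ⟨u, hu, hw⟩ := hext (Pi.single j 1)
    rw [hw]
    simp only [Matrix.add_mulVec, Matrix.sub_mulVec, Matrix.smul_mulVec, pow_two A,
      ← Matrix.mulVec_mulVec, Matrix.one_mulVec, zero_smul, Matrix.zero_mulVec, hB, hA u hu, hA _ (hL u hu),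
      hA _ (hU u hu), hA _ (hL _ (hU u hu)), hA _ (hU _ (hL u hu))]
    ext k
    have := key1 u k
    simp only [Pi.add_apply, Pi.sub_apply, Pi.smul_apply, smul_eq_mul, awRes, Pi.zero_apply]
    linear_combination this
  · apply Matrix.ext_of_mulVec_single
    intro j
    obtain ⟨u, hu, hw⟩ := hext (Pi.single j 1)
    rw [hw]
    simp only [Matrix.add_mulVec, Matrix.sub_mulVec, Matrix.smul_mulVec, pow_two B,
      ← Matrix.mulVec_mulVec, Matrix.one_mulVec, zero_smul, Matrix.zero_mulVec, hB, hA u hu, hA _ (hL u hu),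
      hA _ (hU u hu), hA _ (hU _ (hU u hu)), hA _ (hU _ (hL u hu))]
    ext k
    have := key2 u k
    simp only [Pi.add_apply, Pi.sub_apply, Pi.smul_apply, smul_eq_mul, awRes, Pi.zero_apply]
    linear_combination this
end

section
/- (Askey–Wilson relations in the dual q-Krawtchouk case.) Let d be a non-negative integer and let q, s be nonzero scalars in K. Define, for 0 ≤ i ≤ d, θ_i = q^{−i} + s·q^{i+1} and θ*_i = q^{−i}, and, for 1 ≤ i ≤ d, φ_i = q^{1−2i}·(1 − q^i)(1 − q^{i−d−1}). Let (A, A*) be the associated split pair of (d+1)×(d+1) matrices. Put S = s·q^{d+1} + 1, Q = q^{d+1} + 1, C = −(q² − 1)²/q, C* = (q − 1)²/q^{d+1}. Then (A, A*) satisfies the Askey–Wilson relations AW(q + q^{−1}, 0, 0, s·C, 0, −C*·S, (q + 1)·C*·s·Q, 0). -/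
/-- Action of the lower bidiagonal matrix on sequences. -/
def opLow {K : Type*} [Field K] (T : ℕ → K) (v : ℕ → K) : ℕ → K
  | 0 => T 0 * v 0
  | (k + 1) => T (k + 1) * v (k + 1) + v k

/-- Action of the upper bidiagonal matrix on sequences. -/
def opUp {K : Type*} [Field K] (T P : ℕ → K) (v : ℕ → K) : ℕ → K :=
  fun i => T i * v i + P (i + 1) * v (i + 1)

theorem split_fst_mulVec {K : Type*} [Field K] {d : ℕ} (θ θs φ T : ℕ → K)
    (hT : ∀ i, i ≤ d → θ i = T i) (v : ℕ → K) :
    (splitPair (d := d) θ θs φ).1.mulVec (fun i => v i) = fun i : Fin (d + 1) => opLow T v i := by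
  funext i
  obtain ⟨i, hi⟩ := i
  simp only [splitPair, Matrix.mulVec, dotProduct, Matrix.of_apply]
  rw [Fin.sum_univ_eq_sum_range
    (fun j => (if i = j then θ i else if j + 1 = i then 1 else 0) * v j) (d + 1)]
  have h : ∀ j, (if i = j then θ i else if j + 1 = i then 1 else 0) * v j
      = (if i = j then θ i * v j else 0) + (if j + 1 = i then v j else 0) := by
    intro j
    split_ifs <;> first | omega | simp
  simp only [h, Finset.sum_add_distrib]
  rw [Finset.sum_ite_eq, if_pos (by simpa using hi), hT i (by omega)]
  cases i with
  | zero => simp [opLow]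
  | succ k =>
    have h2 : k < d + 1 := by omega
    simp [opLow, h2]

theorem split_snd_mulVec {K : Type*} [Field K] {d : ℕ} (θ θs φ T P : ℕ → K)
    (hT : ∀ i, i ≤ d → θs i = T i) (hP : ∀ i, 1 ≤ i → i ≤ d → φ i = P i)
    (hP' : P (d + 1) = 0) (v : ℕ → K) :
    (splitPair (d := d) θ θs φ).2.mulVec (fun i => v i) = fun i : Fin (d + 1) => opUp T P v i := by
  funext i
  obtain ⟨i, hi⟩ := i
  simp only [splitPair, Matrix.mulVec, dotProduct, Matrix.of_apply]
  rw [Fin.sum_univ_eq_sum_range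
    (fun j => (if i = j then θs i else if i + 1 = j then φ j else 0) * v j) (d + 1)]
  have h : ∀ j, (if i = j then θs i else if i + 1 = j then φ j else 0) * v j
      = (if i = j then θs i * v j else 0) + (if i + 1 = j then φ j * v j else 0) := by
    intro j
    split_ifs <;> first | omega | simp
  simp only [h, Finset.sum_add_distrib]
  rw [Finset.sum_ite_eq, if_pos (by simpa using hi), hT i (by omega), Finset.sum_ite_eq]
  unfold opUp
  split_ifs with h1
  · rw [hP (i + 1) (by omega) (by simpa using h1)]
  · have : i = d := by simp at h1; omega
    subst this
    simp [hP']

theorem mat_eq_of_seq {K : Type*} [Field K] {n : ℕ} (M N : Matrix (Fin n) (Fin n) K)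
    (h : ∀ v : ℕ → K, M.mulVec (fun i => v i) = N.mulVec (fun i => v i)) : M = N := by
  apply Matrix.ext_of_mulVec_single
  intro i
  have := h (fun k => if k = i then 1 else 0)
  have e : (fun j : Fin n => if (j : ℕ) = i then (1 : K) else 0) = Pi.single i 1 := by
    funext j
    simp [Pi.single_apply, Fin.ext_iff]
  rw [e] at this
  exact this

/-- Askey–Wilson relations for the normalized dual q-Krawtchouk split pair. -/
theorem dual_qKrawtchouk_askey_wilson
    {K : Type*} [Field K] [IsAlgClosed K] (hchar : ringChar K ≠ 2)
    (d : ℕ) (q s : K) (hq : q ≠ 0) (hs : s ≠ 0)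
    (θ θs φ : ℕ → K)
    (hθ : ∀ i : ℕ, i ≤ d → θ i = q ^ (-(i : ℤ)) + s * q ^ ((i : ℤ) + 1))
    (hθs : ∀ i : ℕ, i ≤ d → θs i = q ^ (-(i : ℤ)))
    (hφ : ∀ i : ℕ, 1 ≤ i → i ≤ d →
      φ i = q ^ (1 - 2 * (i : ℤ)) * (1 - q ^ (i : ℤ)) * (1 - q ^ ((i : ℤ) - d - 1)))
    (S Q C Cs : K)
    (hS : S = s * q ^ (d + 1) + 1) (hQ : Q = q ^ (d + 1) + 1)
    (hC : C = -(q ^ 2 - 1) ^ 2 / q) (hCs : Cs = (q - 1) ^ 2 / q ^ (d + 1)) :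
    MatSatisfiesAW (splitPair (d := d) θ θs φ).1 (splitPair (d := d) θ θs φ).2
      (q + q ^ (-1 : ℤ)) 0 0 (s * C) 0 (-Cs * S) ((q + 1) * Cs * s * Q) 0 := by
  have hD : q ^ (d + 1) ≠ 0 := pow_ne_zero _ hq
  have hA := split_fst_mulVec (d := d) θ θs φ (fun i => 1 / q ^ i + s * q * q ^ i) (by
    intro i hi
    rw [hθ i hi, zpow_neg, zpow_add₀ hq]
    simp
    ring)
  have hB := split_snd_mulVec (d := d) θ θs φ (fun i => 1 / q ^ i)
    (fun i => q / (q ^ i) ^ 2 * (1 - q ^ i) * (1 - q ^ i / q ^ (d + 1))) (by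
      intro i hi
      rw [hθs i hi, zpow_neg]
      simp) (by
      intro i _ hi
      have e : (i : ℤ) - d - 1 = (i : ℤ) - ((d + 1 : ℕ) : ℤ) := by push_cast; ring
      have e2 : (1 : ℤ) - 2 * i = 1 - ((i * 2 : ℕ) : ℤ) := by push_cast; ring
      rw [hφ i (by assumption) hi, e, e2, zpow_sub₀ hq, zpow_sub₀ hq, zpow_natCast,
        zpow_natCast, zpow_natCast, pow_mul]
      simp) (by simp [hD])
  generalize (splitPair (d := d) θ θs φ).1 = A at hA ⊢
  generalize (splitPair (d := d) θ θs φ).2 = B at hB ⊢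
  subst hS hQ hC hCs
  generalize q ^ (d + 1) = D at hD hA hB ⊢
  constructor
  · apply mat_eq_of_seq
    intro v
    simp only [pow_two A, zero_smul, sub_zero, zero_add, Matrix.add_mulVec, Matrix.sub_mulVec,
      Matrix.smul_mulVec, ← Matrix.mulVec_mulVec, hA, hB, Matrix.one_mulVec]
    funext i
    obtain ⟨i, hi⟩ := i
    simp only [Pi.add_apply, Pi.sub_apply, Pi.smul_apply, smul_eq_mul, zpow_neg_one]
    rcases i with _ | _ | i
    · simp only [opLow, opUp, pow_succ, pow_zero]
      field_simp
      ring
    · simp only [opLow, opUp, pow_succ, pow_zero]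
      field_simp
      ring
    · have hx : q ^ i ≠ 0 := pow_ne_zero _ hq
      simp only [opLow, opUp, pow_succ]
      generalize q ^ i = x at hx ⊢
      field_simp
      ring
  · apply mat_eq_of_seq
    intro v
    simp only [pow_two B, zero_smul, sub_zero, zero_add, add_zero, Matrix.add_mulVec,
      Matrix.sub_mulVec,
      Matrix.smul_mulVec, ← Matrix.mulVec_mulVec, hA, hB, Matrix.one_mulVec]
    funext i
    obtain ⟨i, hi⟩ := i
    simp only [Pi.add_apply, Pi.sub_apply, Pi.smul_apply, smul_eq_mul, zpow_neg_one]
    rcases i with _ | i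
    · simp only [opLow, opUp, pow_succ, pow_zero]
      field_simp
      ring
    · have hx : q ^ i ≠ 0 := pow_ne_zero _ hq
      simp only [opLow, opUp, pow_succ]
      generalize q ^ i = x at hx ⊢
      field_simp
      ring
end

section
/- (Racah parameter array.) Let d be a non-negative integer and let u, u*, v be scalars in K; for an integer n, n also denotes the element n·1 of K. Define, for 0 ≤ i ≤ d, θ_i = (i + u)(i + u + 1) and θ*_i = (i + u*)(i + u* + 1), and, for 1 ≤ i ≤ d, φ_i = i·(i − d − 1)·(i + u + u* − v)·(i + u + u* + d + 1 + v) and ϕ_i = i·(i − d − 1)·(i − u + u* + v)·(i − u + u* − d − 1 − v). Assume θ_i ≠ θ_j and θ*_i ≠ θ*_j for 0 ≤ i < j ≤ d, and φ_i ≠ 0 and ϕ_i ≠ 0 for 1 ≤ i ≤ d. Then (θ_0,…,θ_d; θ*_0,…,θ*_d; φ_1,…,φ_d; ϕ_1,…,ϕ_d) is a parameter array over K of diameter d, i.e., conditions PA3, PA4 and PA5 also hold. -/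
/-- The Racah data forms a parameter array: PA3, PA4 and PA5 hold. -/
theorem racah_parameter_array
    {K : Type*} [Field K] [IsAlgClosed K] (hchar : ringChar K ≠ 2)
    (d : ℕ) (u us v : K)
    (θ θs φ ϕ : ℕ → K)
    (hθ : ∀ i : ℕ, i ≤ d → θ i = ((i : K) + u) * ((i : K) + u + 1))
    (hθs : ∀ i : ℕ, i ≤ d → θs i = ((i : K) + us) * ((i : K) + us + 1))
    (hφ : ∀ i : ℕ, 1 ≤ i → i ≤ d →
      φ i = (i : K) * ((i : K) - (d : K) - 1) * ((i : K) + u + us - v) *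
        ((i : K) + u + us + (d : K) + 1 + v))
    (hϕ : ∀ i : ℕ, 1 ≤ i → i ≤ d →
      ϕ i = (i : K) * ((i : K) - (d : K) - 1) * ((i : K) - u + us + v) *
        ((i : K) - u + us - (d : K) - 1 - v))
    (hPA1 : ∀ i j : ℕ, i < j → j ≤ d → θ i ≠ θ j ∧ θs i ≠ θs j)
    (hPA2 : ∀ i : ℕ, 1 ≤ i → i ≤ d → φ i ≠ 0 ∧ ϕ i ≠ 0) :
    (∀ i : ℕ, 1 ≤ i → i ≤ d →
      φ i = ϕ 1 * (∑ j ∈ Finset.range i, (θ j - θ (d - j)) / (θ 0 - θ d)) +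
        (θs i - θs 0) * (θ (i - 1) - θ d)) ∧
    (∀ i : ℕ, 1 ≤ i → i ≤ d →
      ϕ i = φ 1 * (∑ j ∈ Finset.range i, (θ j - θ (d - j)) / (θ 0 - θ d)) +
        (θs i - θs 0) * (θ (d - i + 1) - θ 0)) ∧
    (∃ β : K, ∀ i : ℕ, 2 ≤ i → i ≤ d - 1 →
      (θ (i - 2) - θ (i + 1)) / (θ (i - 1) - θ i) = β ∧
      (θs (i - 2) - θs (i + 1)) / (θs (i - 1) - θs i) = β) := by
  have key : 1 ≤ d → (d : K) ≠ 0 ∧ ∀ i : ℕ, i ≤ d →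
      (∑ j ∈ Finset.range i, (θ j - θ (d - j)) / (θ 0 - θ d))
        = (i : K) * ((d : K) - i + 1) / d := by
    intro hd
    have h0 := (hPA1 0 d (by omega) le_rfl).1
    have e0 : θ 0 - θ d = -((d : K) * ((d : K) + 2 * u + 1)) := by
      rw [hθ 0 (by omega), hθ d le_rfl]; push_cast; ring
    have hne : (d : K) * ((d : K) + 2 * u + 1) ≠ 0 := by
      intro h
      rw [h, neg_zero] at e0
      exact h0 (sub_eq_zero.mp e0)
    have hd0 : (d : K) ≠ 0 := left_ne_zero_of_mul hne
    have hu0 : (d : K) + 2 * u + 1 ≠ 0 := right_ne_zero_of_mul hne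
    refine ⟨hd0, fun i => ?_⟩
    induction i with
    | zero => intro _; simp
    | succ n ih =>
      intro hn
      have e1 : (θ n - θ (d - n)) / (θ 0 - θ d) = ((d : K) - 2 * n) / d := by
        have e2 : θ n - θ (d - n) = -(((d : K) - 2 * n) * ((d : K) + 2 * u + 1)) := by
          rw [hθ n (by omega), hθ (d - n) (by omega), Nat.cast_sub (by omega)]; ring
        rw [e0, e2, div_eq_div_iff (neg_ne_zero.mpr hne) hd0]; ring
      rw [Finset.sum_range_succ, ih (by omega), e1, ← add_div]
      congr 1
      push_cast; ring
  refine ⟨?_, ?_, 3, ?_⟩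
  · intro i h1 hi
    obtain ⟨hd0, hs⟩ := key (by omega)
    rw [hs i hi, hφ i h1 hi, hϕ 1 le_rfl (by omega), hθs i hi, hθs 0 (by omega),
      hθ (i - 1) (by omega), hθ d le_rfl, Nat.cast_sub h1]
    push_cast
    field_simp
    ring
  · intro i h1 hi
    obtain ⟨hd0, hs⟩ := key (by omega)
    rw [hs i hi, hϕ i h1 hi, hφ 1 le_rfl (by omega), hθs i hi, hθs 0 (by omega),
      hθ (d - i + 1) (by omega), hθ 0 (by omega), Nat.cast_add, Nat.cast_sub hi]
    push_cast
    field_simp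
    ring
  · intro i h2 hi
    have hne := hPA1 (i - 1) i (by omega) (by omega)
    constructor
    · rw [div_eq_iff (sub_ne_zero.mpr hne.1), hθ (i - 2) (by omega), hθ (i + 1) (by omega),
        hθ (i - 1) (by omega), hθ i (by omega), Nat.cast_sub h2, Nat.cast_sub (by omega)]
      push_cast; ring
    · rw [div_eq_iff (sub_ne_zero.mpr hne.2), hθs (i - 2) (by omega), hθs (i + 1) (by omega),
        hθs (i - 1) (by omega), hθs i (by omega), Nat.cast_sub h2, Nat.cast_sub (by omega)]
      push_cast; ring
end

section
/- (Bannai–Ito parameter array.) Let d be a non-negative integer and let u, u*, v be scalars in K; for an integer n, n also denotes the element n·1 of K, and d/2 denotes d·(2·1)^{−1} in K. Define, for 0 ≤ i ≤ d, θ_i = (−1)^i·(i + u − d/2) and θ*_i = (−1)^i·(i + u* − d/2). For 1 ≤ i ≤ d define φ_i as follows: if d is even and i is even, φ_i = −i·(i + u + u* + v − (d+1)/2); if d is even and i is odd, φ_i = −(i − d − 1)·(i + u + u* − v − (d+1)/2); if d is odd and i is even, φ_i = −i·(i − d − 1); if d is odd and i is odd, φ_i = v² − (i + u + u* − (d+1)/2)².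 Likewise define ϕ_i: if d is even and i is even, ϕ_i = i·(i − u + u* − v − (d+1)/2); if d is even and i is odd, ϕ_i = (i − d − 1)·(i − u + u* + v − (d+1)/2); if d is odd and i is even, ϕ_i = −i·(i − d − 1); if d is odd and i is odd, ϕ_i = v² − (i − u + u* − (d+1)/2)². Assume θ_i ≠ θ_j and θ*_i ≠ θ*_j for 0 ≤ i < j ≤ d, and φ_i ≠ 0 and ϕ_i ≠ 0 for 1 ≤ i ≤ d. Then (θ_0,…,θ_d; θ*_0,…,θ*_d; φ_1,…,φ_d; ϕ_1,…,ϕ_d) is a parameter array over K of diameter d, i.e., conditions PA3, PA4 and PA5 also hold. -/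
/-- The Bannai–Ito data forms a parameter array: PA3, PA4 and PA5 hold. -/
theorem bannai_ito_parameter_array
    {K : Type*} [Field K] [IsAlgClosed K] (hchar : ringChar K ≠ 2)
    (d : ℕ) (u us v : K)
    (θ θs φ ϕ : ℕ → K)
    (hθ : ∀ i : ℕ, i ≤ d → θ i = (-1 : K) ^ i * ((i : K) + u - (d : K) / 2))
    (hθs : ∀ i : ℕ, i ≤ d → θs i = (-1 : K) ^ i * ((i : K) + us - (d : K) / 2))
    (hφ : ∀ i : ℕ, 1 ≤ i → i ≤ d →
      (Even d → Even i →
        φ i = -(i : K) * ((i : K) + u + us + v - ((d : K) + 1) / 2)) ∧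
      (Even d → Odd i →
        φ i = -((i : K) - (d : K) - 1) * ((i : K) + u + us - v - ((d : K) + 1) / 2)) ∧
      (Odd d → Even i →
        φ i = -(i : K) * ((i : K) - (d : K) - 1)) ∧
      (Odd d → Odd i →
        φ i = v ^ 2 - ((i : K) + u + us - ((d : K) + 1) / 2) ^ 2))
    (hϕ : ∀ i : ℕ, 1 ≤ i → i ≤ d →
      (Even d → Even i →
        ϕ i = (i : K) * ((i : K) - u + us - v - ((d : K) + 1) / 2)) ∧
      (Even d → Odd i →
        ϕ i = ((i : K) - (d : K) - 1) * ((i : K) - u + us + v - ((d : K) + 1) / 2)) ∧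
      (Odd d → Even i →
        ϕ i = -(i : K) * ((i : K) - (d : K) - 1)) ∧
      (Odd d → Odd i →
        ϕ i = v ^ 2 - ((i : K) - u + us - ((d : K) + 1) / 2) ^ 2))
    (hPA1 : ∀ i j : ℕ, i < j → j ≤ d → θ i ≠ θ j ∧ θs i ≠ θs j)
    (hPA2 : ∀ i : ℕ, 1 ≤ i → i ≤ d → φ i ≠ 0 ∧ ϕ i ≠ 0) :
    (∀ i : ℕ, 1 ≤ i → i ≤ d →
      φ i = ϕ 1 * (∑ j ∈ Finset.range i, (θ j - θ (d - j)) / (θ 0 - θ d)) +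
        (θs i - θs 0) * (θ (i - 1) - θ d)) ∧
    (∀ i : ℕ, 1 ≤ i → i ≤ d →
      ϕ i = φ 1 * (∑ j ∈ Finset.range i, (θ j - θ (d - j)) / (θ 0 - θ d)) +
        (θs i - θs 0) * (θ (d - i + 1) - θ 0)) ∧
    (∃ β : K, ∀ i : ℕ, 2 ≤ i → i ≤ d - 1 →
      (θ (i - 2) - θ (i + 1)) / (θ (i - 1) - θ i) = β ∧
      (θs (i - 2) - θs (i + 1)) / (θs (i - 1) - θs i) = β) := by
  have h2 : (2 : K) ≠ 0 := Ring.two_ne_zero hchar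
  have hfirst : ∀ i : ℕ, 1 ≤ i → i ≤ d → θ 0 - θ d ≠ 0 := fun i h1 hi =>
    sub_ne_zero.mpr (hPA1 0 d (by omega) le_rfl).1
  have hsub : ∀ j : ℕ, j ≤ d → θ (d - j) = (-1 : K) ^ (d - j) * ((d : K) - j + u - (d : K) / 2) := by
    intro j hj
    rw [hθ _ (Nat.sub_le d j), Nat.cast_sub hj]
  have key : ∀ i : ℕ, i ≤ d →
      (Even d → Even i → ∑ j ∈ Finset.range i, (θ j - θ (d - j)) = -(i : K)) ∧
      (Even d → Odd i → ∑ j ∈ Finset.range i, (θ j - θ (d - j)) = (i : K) - d - 1) ∧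
      (Odd d → Even i → ∑ j ∈ Finset.range i, (θ j - θ (d - j)) = 0) ∧
      (Odd d → Odd i → ∑ j ∈ Finset.range i, (θ j - θ (d - j)) = 2 * u) := by
    intro i
    induction i with
    | zero => simp
    | succ n ih =>
      intro hn
      obtain ⟨i1, i2, i3, i4⟩ := ih (by omega)
      have hn' : n ≤ d := by omega
      rw [Finset.sum_range_succ, hθ n hn', hsub n hn']
      refine ⟨fun hd he => ?_, fun hd he => ?_, fun hd he => ?_, fun hd he => ?_⟩
      · have ho : Odd n := by grind
        have hx : Odd (d - n) := by grind
        rw [i2 hd ho, ho.neg_one_pow, hx.neg_one_pow]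
        push_cast
        field_simp
        ring
      · have ho : Even n := by grind
        have hx : Even (d - n) := by grind
        rw [i1 hd ho, ho.neg_one_pow, hx.neg_one_pow]
        push_cast
        field_simp
        ring
      · have ho : Odd n := by grind
        have hx : Even (d - n) := by grind
        rw [i4 hd ho, ho.neg_one_pow, hx.neg_one_pow]
        field_simp
        ring
      · have ho : Even n := by grind
        have hx : Odd (d - n) := by grind
        rw [i3 hd ho, ho.neg_one_pow, hx.neg_one_pow]
        field_simp
        ring
  have h00 := hθ 0 (Nat.zero_le d)
  have hs0 := hθs 0 (Nat.zero_le d)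
  have hdd := hθ d le_rfl
  simp only [pow_zero, one_mul, Nat.cast_zero] at h00 hs0
  have hE : Even d → θ 0 - θ d = -(d : K) := by
    intro hd
    rw [h00, hdd, hd.neg_one_pow]
    ring
  have hO : Odd d → θ 0 - θ d = 2 * u := by
    intro hd
    rw [h00, hdd, hd.neg_one_pow]
    field_simp
    ring
  refine ⟨?_, ?_, ?_⟩
  · intro i h1 hi
    have hne := hfirst i h1 hi
    obtain ⟨k1, k2, k3, k4⟩ := key i hi
    obtain ⟨p1, p2, p3, p4⟩ := hφ i h1 hi
    obtain ⟨-, q2, -, q4⟩ := hϕ 1 le_rfl (h1.trans hi)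
    have hi1 := hθ (i - 1) (by omega)
    rw [Nat.cast_sub h1] at hi1
    rw [← Finset.sum_div, hθs i hi, hs0, hi1, hdd]
    rw [← hdd]
    rcases Nat.even_or_odd d with hd | hd <;> rcases Nat.even_or_odd i with he | he
    · have ho : Odd (i - 1) := by grind
      have hD : (d : K) ≠ 0 := by rw [hE hd] at hne; simpa using hne
      rw [p1 hd he, q2 hd odd_one, k1 hd he, hE hd, hdd, he.neg_one_pow, ho.neg_one_pow,
        hd.neg_one_pow]
      push_cast
      field_simp
      ring
    · have ho : Even (i - 1) := by grind
      have hD : (d : K) ≠ 0 := by rw [hE hd] at hne; simpa using hne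
      rw [p2 hd he, q2 hd odd_one, k2 hd he, hE hd, hdd, he.neg_one_pow, ho.neg_one_pow,
        hd.neg_one_pow]
      push_cast
      field_simp
      ring
    · have ho : Odd (i - 1) := by grind
      rw [p3 hd he, k3 hd he, hdd, he.neg_one_pow, ho.neg_one_pow, hd.neg_one_pow]
      push_cast
      field_simp
      ring
    · have ho : Even (i - 1) := by grind
      rw [p4 hd he, q4 hd odd_one, k4 hd he, hO hd, div_self (hO hd ▸ hne), hdd,
        he.neg_one_pow, ho.neg_one_pow, hd.neg_one_pow]
      push_cast
      field_simp
      ring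
  · intro i h1 hi
    have hne := hfirst i h1 hi
    obtain ⟨k1, k2, k3, k4⟩ := key i hi
    obtain ⟨p1, p2, p3, p4⟩ := hϕ i h1 hi
    obtain ⟨-, q2, -, q4⟩ := hφ 1 le_rfl (h1.trans hi)
    have hi1 := hθ (d - i + 1) (by omega)
    rw [Nat.cast_add, Nat.cast_sub hi, Nat.cast_one] at hi1
    rw [← Finset.sum_div, hθs i hi, hs0, hi1]
    rcases Nat.even_or_odd d with hd | hd <;> rcases Nat.even_or_odd i with he | he
    · have ho : Odd (d - i + 1) := by grind
      have hD : (d : K) ≠ 0 := by rw [hE hd] at hne; simpa using hne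
      rw [p1 hd he, q2 hd odd_one, k1 hd he, hE hd, h00, he.neg_one_pow, ho.neg_one_pow]
      push_cast
      field_simp
      ring
    · have ho : Even (d - i + 1) := by grind
      have hD : (d : K) ≠ 0 := by rw [hE hd] at hne; simpa using hne
      rw [p2 hd he, q2 hd odd_one, k2 hd he, hE hd, h00, he.neg_one_pow, ho.neg_one_pow]
      push_cast
      field_simp
      ring
    · have ho : Even (d - i + 1) := by grind
      rw [p3 hd he, k3 hd he, h00, he.neg_one_pow, ho.neg_one_pow]
      field_simp
      ring
    · have ho : Odd (d - i + 1) := by grind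
      rw [p4 hd he, q4 hd odd_one, k4 hd he, hO hd, div_self (hO hd ▸ hne), h00,
        he.neg_one_pow, ho.neg_one_pow]
      push_cast
      field_simp
      ring
  · refine ⟨-1, fun i h1 hi => ?_⟩
    obtain ⟨n, rfl⟩ : ∃ n, i = n + 2 := ⟨i - 2, by omega⟩
    obtain ⟨a, b⟩ := hPA1 (n + 1) (n + 2) (by omega) (by omega)
    have e1 : n + 2 - 2 = n := by omega
    have e2 : n + 2 - 1 = n + 1 := by omega
    rw [e1, e2]
    constructor
    · rw [div_eq_iff (sub_ne_zero.mpr a), hθ n (by omega), hθ (n + 1) (by omega),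
        hθ (n + 2) (by omega), hθ (n + 2 + 1) (by omega)]
      push_cast
      ring
    · rw [div_eq_iff (sub_ne_zero.mpr b), hθs n (by omega), hθs (n + 1) (by omega),
        hθs (n + 2) (by omega), hθs (n + 2 + 1) (by omega)]
      push_cast
      ring
end

section
/- (Askey–Wilson relations in the Racah case.) Let d be a non-negative integer and let u, u*, v be scalars in K; for an integer n, n also denotes the element n·1 of K. Define, for 0 ≤ i ≤ d, θ_i = (i + u)(i + u + 1) and θ*_i = (i + u*)(i + u* + 1), and, for 1 ≤ i ≤ d, φ_i = i·(i − d − 1)·(i + u + u* − v)·(i + u + u* + d + 1 + v). Let (A, A*) be the associated split pair of (d+1)×(d+1) matrices. Then (A, A*) satisfies the Askey–Wilson relations AW(2, 2, 2, 0, 0, ω, η, η*), where ω = −2u² − 2(u*)² − 2v² − 2(d + 1)(u + u* + v) − 2d² − 4d, η = 2u·(u + d + 1)·(v − u*)·(v + u* + d + 1), and η* = 2u*·(u* + d + 1)·(v − u)·(v + u + d + 1). -/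
/-- Left multiplication by the lower bidiagonal matrix, on doubly indexed families. -/
def rkA {K : Type*} [Field K] (u : K) (f : ℕ → ℕ → K) : ℕ → ℕ → K := fun i j =>
  ((i : K) + u) * ((i : K) + u + 1) * f i j + (if i = 0 then 0 else f (i - 1) j)

/-- The entry formula for the superdiagonal. -/
def rkPhi {K : Type*} [Field K] (d u us v i : K) : K :=
  i * (i - d - 1) * (i + u + us - v) * (i + u + us + d + 1 + v)

/-- Left multiplication by the upper bidiagonal matrix, on doubly indexed families. -/
def rkS {K : Type*} [Field K] (d u us v : K) (f : ℕ → ℕ → K) : ℕ → ℕ → K := fun i j =>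
  ((i : K) + us) * ((i : K) + us + 1) * f i j + rkPhi d u us v ((i : K) + 1) * f (i + 1) j

/-- The identity family. -/
def rkI {K : Type*} [Field K] : ℕ → ℕ → K := fun i j => if i = j then 1 else 0

/-- Truncation to a matrix. -/
def rkMat {K : Type*} [Field K] (d : ℕ) (f : ℕ → ℕ → K) : Matrix (Fin (d + 1)) (Fin (d + 1)) K :=
  Matrix.of fun i j => f i j

lemma rk_one {K : Type*} [Field K] (d : ℕ) :
    (1 : Matrix (Fin (d + 1)) (Fin (d + 1)) K) = rkMat d rkI := by
  ext i j
  simp [rkMat, rkI, Matrix.one_apply, Fin.ext_iff]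

lemma rkA_zero {K : Type*} [Field K] (u : K) (f : ℕ → ℕ → K) (j : ℕ) :
    rkA u f 0 j = u * (u + 1) * f 0 j := by
  simp [rkA]

lemma rkA_succ {K : Type*} [Field K] (u : K) (f : ℕ → ℕ → K) (i j : ℕ) :
    rkA u f (i + 1) j = ((i : K) + 1 + u) * ((i : K) + 1 + u + 1) * f (i + 1) j + f i j := by
  simp [rkA]

lemma rkI_eq {K : Type*} [Field K] (i j : ℕ) (h : i = j) : (rkI i j : K) = 1 := if_pos h

lemma rkI_ne {K : Type*} [Field K] (i j : ℕ) (h : i ≠ j) : (rkI i j : K) = 0 := if_neg h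

lemma rk_A {K : Type*} [Field K] (d : ℕ) (u : K) (θ θs φ : ℕ → K)
    (hθ : ∀ i : ℕ, i ≤ d → θ i = ((i : K) + u) * ((i : K) + u + 1)) (f : ℕ → ℕ → K) :
    (splitPair (d := d) θ θs φ).1 * rkMat d f = rkMat d (rkA u f) := by
  ext i j
  rw [Matrix.mul_apply]
  simp only [splitPair, rkMat, rkA, Matrix.of_apply]
  rw [← hθ i (by omega)]
  have h1 : ∀ x : Fin (d + 1), (if (i : ℕ) = x then θ i else if (x : ℕ) + 1 = i then 1 else 0) * f x j
      = (if i = x then θ i * f x j else 0) + (if (x : ℕ) + 1 = i then f x j else 0) := by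
    intro x
    by_cases h : i = x
    · subst h; simp
    · have : (i : ℕ) ≠ x := fun h' => h (Fin.ext h')
      simp [h, this]
  rw [Finset.sum_congr rfl (fun x _ => h1 x), Finset.sum_add_distrib, Finset.sum_ite_eq]
  simp only [Finset.mem_univ, if_true]
  congr 1
  split_ifs with h
  · apply Finset.sum_eq_zero
    intro x _
    rw [if_neg (by omega)]
  · rw [Finset.sum_eq_single (⟨(i : ℕ) - 1, by omega⟩ : Fin (d + 1))]
    · rw [if_pos (by simp only; omega)]
    · intro b _ hb
      rw [if_neg]
      intro h'
      apply hb
      ext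
      simp only
      omega
    · simp

lemma rk_S {K : Type*} [Field K] (d : ℕ) (u us v : K) (θ θs φ : ℕ → K)
    (hθs : ∀ i : ℕ, i ≤ d → θs i = ((i : K) + us) * ((i : K) + us + 1))
    (hφ : ∀ i : ℕ, 1 ≤ i → i ≤ d →
      φ i = (i : K) * ((i : K) - (d : K) - 1) * ((i : K) + u + us - v) *
        ((i : K) + u + us + (d : K) + 1 + v)) (f : ℕ → ℕ → K) :
    (splitPair (d := d) θ θs φ).2 * rkMat d f = rkMat d (rkS (d : K) u us v f) := by
  ext i j
  rw [Matrix.mul_apply]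
  simp only [splitPair, rkMat, rkS, Matrix.of_apply]
  rw [← hθs i (by omega)]
  have h1 : ∀ x : Fin (d + 1),
      (if (i : ℕ) = x then θs i else if (i : ℕ) + 1 = x then φ x else 0) * f x j
      = (if i = x then θs i * f x j else 0) + (if (i : ℕ) + 1 = x then φ x * f x j else 0) := by
    intro x
    by_cases h : i = x
    · subst h; simp
    · have : (i : ℕ) ≠ x := fun h' => h (Fin.ext h')
      simp [h, this]
  rw [Finset.sum_congr rfl (fun x _ => h1 x), Finset.sum_add_distrib, Finset.sum_ite_eq]
  simp only [Finset.mem_univ, if_true]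
  congr 1
  by_cases h : (i : ℕ) = d
  · rw [Finset.sum_eq_zero]
    · simp [rkPhi, h]
    · intro x _
      rw [if_neg (by omega)]
  · rw [Finset.sum_eq_single (⟨(i : ℕ) + 1, by omega⟩ : Fin (d + 1))]
    · rw [if_pos rfl]
      simp only
      rw [hφ _ (by omega) (by omega), rkPhi]
      push_cast
      ring
    · intro b _ hb
      rw [if_neg]
      intro h'
      apply hb
      ext
      simp only
      omega
    · simp

set_option maxHeartbeats 4000000 in
lemma rk_rel1 {K : Type*} [Field K] (d u us v : K) (i j : ℕ) :
    rkA u (rkA u (rkS d u us v rkI)) i j - 2 * rkA u (rkS d u us v (rkA u rkI)) i j + rkS d u us v (rkA u (rkA u rkI)) i j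
      - 2 * (rkA u (rkS d u us v rkI) i j + rkS d u us v (rkA u rkI) i j) - 0 * rkS d u us v rkI i j =
    2 * rkA u (rkA u rkI) i j + (-2 * u ^ 2 - 2 * us ^ 2 - 2 * v ^ 2 - 2 * (d + 1) * (u + us + v)
        - 2 * d ^ 2 - 4 * d) * rkA u rkI i j
      + (2 * u * (u + d + 1) * (v - us) * (v + us + d + 1)) * rkI i j := by
  have hj : j = i ∨ j = i + 1 ∨ j = i + 2 ∨ i = j + 1 ∨ i = j + 2 ∨
      (j ≠ i ∧ j ≠ i + 1 ∧ j ≠ i + 2 ∧ i ≠ j + 1 ∧ i ≠ j + 2) := by omega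
  rcases hj with rfl | rfl | rfl | rfl | rfl | ⟨h0, h1, h2, h3, h4⟩
  · rcases j with _ | _ | j <;> simp only [rkA_zero, rkA_succ, rkS] <;>
      simp (disch := omega) only [rkI_eq, rkI_ne, rkPhi] <;> push_cast <;> ring
  · rcases i with _ | _ | i <;> simp only [rkA_zero, rkA_succ, rkS] <;>
      simp (disch := omega) only [rkI_eq, rkI_ne, rkPhi] <;> push_cast <;> ring
  · rcases i with _ | _ | i <;> simp only [rkA_zero, rkA_succ, rkS] <;>
      simp (disch := omega) only [rkI_eq, rkI_ne, rkPhi] <;> push_cast <;> ring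
  · rcases j with _ | j <;> simp only [rkA_zero, rkA_succ, rkS] <;>
      simp (disch := omega) only [rkI_eq, rkI_ne, rkPhi] <;> push_cast <;> ring
  · simp only [rkA_succ, rkS]
    simp (disch := omega) only [rkI_eq, rkI_ne, rkPhi]
    push_cast
    ring
  · rcases i with _ | _ | i <;> simp only [rkA_zero, rkA_succ, rkS] <;>
      simp (disch := omega) only [rkI_ne] <;> ring

set_option maxHeartbeats 4000000 in
lemma rk_rel2 {K : Type*} [Field K] (d u us v : K) (i j : ℕ) :
    rkS d u us v (rkS d u us v (rkA u rkI)) i j - 2 * rkS d u us v (rkA u (rkS d u us v rkI)) i j + rkA u (rkS d u us v (rkS d u us v rkI)) i j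
      - 2 * (rkS d u us v (rkA u rkI) i j + rkA u (rkS d u us v rkI) i j) - 0 * rkA u rkI i j =
    2 * rkS d u us v (rkS d u us v rkI) i j + (-2 * u ^ 2 - 2 * us ^ 2 - 2 * v ^ 2 - 2 * (d + 1) * (u + us + v)
        - 2 * d ^ 2 - 4 * d) * rkS d u us v rkI i j
      + (2 * us * (us + d + 1) * (v - u) * (v + u + d + 1)) * rkI i j := by
  have hj : j = i ∨ j = i + 1 ∨ j = i + 2 ∨ i = j + 1 ∨ i = j + 2 ∨
      (j ≠ i ∧ j ≠ i + 1 ∧ j ≠ i + 2 ∧ i ≠ j + 1 ∧ i ≠ j + 2) := by omega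
  have key : ∀ x : K, rkPhi d u us v x - 2 * rkPhi d u us v (x + 1) + rkPhi d u us v (x + 1 + 1)
      = 12 * (x + 1) ^ 2 + 2 + 12 * (x + 1) * (u + us)
        + 2 * ((u + us - v) * (u + us + d + 1 + v) - (d + 1) * (2 * (u + us) + d + 1)) := by
    intro x
    simp only [rkPhi]
    ring
  rcases hj with rfl | rfl | rfl | rfl | rfl | ⟨h0, h1, h2, h3, h4⟩
  · rcases j with _ | j <;> simp only [rkA_zero, rkA_succ, rkS] <;>
      simp (disch := omega) only [rkI_eq, rkI_ne, rkPhi] <;> push_cast <;> ring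
  · rcases i with _ | i
    · have k0 := key 0
      have z : rkPhi d u us v 0 = 0 := by simp [rkPhi]
      simp only [rkA_zero, rkA_succ, rkS]
      simp (disch := omega) only [rkI_eq, rkI_ne]
      simp only [z, Nat.cast_zero, Nat.cast_add, Nat.cast_one] at k0 ⊢
      generalize rkPhi d u us v (0 + 1) = P at *
      generalize rkPhi d u us v (0 + 1 + 1) = Q at *
      linear_combination P * k0
    · have k0 := key ((i : K) + 1)
      simp only [rkA_succ, rkS]
      simp (disch := omega) only [rkI_eq, rkI_ne]
      simp only [Nat.cast_add, Nat.cast_one]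
      generalize rkPhi d u us v ((i : K) + 1) = O at *
      generalize rkPhi d u us v ((i : K) + 1 + 1) = P at *
      generalize rkPhi d u us v ((i : K) + 1 + 1 + 1) = Q at *
      linear_combination P * k0
  · rcases i with _ | i <;> simp only [rkA_zero, rkA_succ, rkS] <;>
      simp (disch := omega) only [rkI_eq, rkI_ne] <;> push_cast <;> ring
  · rcases j with _ | j <;> simp only [rkA_succ, rkA_zero, rkS] <;>
      simp (disch := omega) only [rkI_eq, rkI_ne, rkPhi] <;> push_cast <;> ring
  · simp only [rkA_succ, rkS]
    simp (disch := omega) only [rkI_ne]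
    ring
  · rcases i with _ | i <;> simp only [rkA_zero, rkA_succ, rkS] <;>
      simp (disch := omega) only [rkI_ne] <;> ring

/-- Askey–Wilson relations for the normalized Racah split pair. -/
theorem racah_askey_wilson
    {K : Type*} [Field K] [IsAlgClosed K] (hchar : ringChar K ≠ 2)
    (d : ℕ) (u us v : K)
    (θ θs φ : ℕ → K)
    (hθ : ∀ i : ℕ, i ≤ d → θ i = ((i : K) + u) * ((i : K) + u + 1))
    (hθs : ∀ i : ℕ, i ≤ d → θs i = ((i : K) + us) * ((i : K) + us + 1))
    (hφ : ∀ i : ℕ, 1 ≤ i → i ≤ d →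
      φ i = (i : K) * ((i : K) - (d : K) - 1) * ((i : K) + u + us - v) *
        ((i : K) + u + us + (d : K) + 1 + v)) :
    MatSatisfiesAW (splitPair (d := d) θ θs φ).1 (splitPair (d := d) θ θs φ).2
      2 2 2 0 0
      (-2 * u ^ 2 - 2 * us ^ 2 - 2 * v ^ 2 - 2 * ((d : K) + 1) * (u + us + v)
        - 2 * (d : K) ^ 2 - 4 * (d : K))
      (2 * u * (u + (d : K) + 1) * (v - us) * (v + us + (d : K) + 1))
      (2 * us * (us + (d : K) + 1) * (v - u) * (v + u + (d : K) + 1)) := by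
  have hA := rk_A d u θ θs φ hθ
  have hS := rk_S d u us v θ θs φ hθs hφ
  set A := (splitPair (d := d) θ θs φ).1
  set S := (splitPair (d := d) θ θs φ).2
  have eA : A = rkMat d (rkA u rkI) := by rw [← hA, ← rk_one, mul_one]
  have eS : S = rkMat d (rkS (d : K) u us v rkI) := by rw [← hS, ← rk_one, mul_one]
  have eAA : A ^ 2 = rkMat d (rkA u (rkA u rkI)) := by rw [← hA, ← eA, pow_two]
  have eSS : S ^ 2 = rkMat d (rkS (d : K) u us v (rkS (d : K) u us v rkI)) := by
    rw [← hS, ← eS, pow_two]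
  have eAS : A * S = rkMat d (rkA u (rkS (d : K) u us v rkI)) := by rw [← hA, ← eS]
  have eSA : S * A = rkMat d (rkS (d : K) u us v (rkA u rkI)) := by rw [← hS, ← eA]
  have e1 : A ^ 2 * S = rkMat d (rkA u (rkA u (rkS (d : K) u us v rkI))) := by
    rw [← hA, ← eAS, pow_two, mul_assoc]
  have e2 : A * S * A = rkMat d (rkA u (rkS (d : K) u us v (rkA u rkI))) := by
    rw [← hA, ← eSA, mul_assoc]
  have e3 : S * A ^ 2 = rkMat d (rkS (d : K) u us v (rkA u (rkA u rkI))) := by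
    rw [← hS, ← eAA]
  have e4 : S ^ 2 * A = rkMat d (rkS (d : K) u us v (rkS (d : K) u us v (rkA u rkI))) := by
    rw [← hS, ← eSA, pow_two, mul_assoc]
  have e5 : S * A * S = rkMat d (rkS (d : K) u us v (rkA u (rkS (d : K) u us v rkI))) := by
    rw [← hS, ← eAS, mul_assoc]
  have e6 : A * S ^ 2 = rkMat d (rkA u (rkS (d : K) u us v (rkS (d : K) u us v rkI))) := by
    rw [← hA, ← eSS]
  constructor
  · rw [e1, e2, e3, eAS, eSA, eAA, eA, eS, rk_one]
    ext i j
    exact rk_rel1 (d : K) u us v i j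
  · rw [e4, e5, e6, eAS, eSA, eSS, eA, eS, rk_one]
    ext i j
    exact rk_rel2 (d : K) u us v i j
end

section
/- (Askey–Wilson relations in the Krawtchouk case.) Let d be a non-negative integer and let v be a scalar in K; for an integer n, n also denotes the element n·1 of K, and d/2 denotes d·(2·1)^{−1} in K. Define, for 0 ≤ i ≤ d, θ_i = i − d/2 and θ*_i = i − d/2, and, for 1 ≤ i ≤ d, φ_i = v·i·(i − d − 1). Let (A, A*) be the associated split pair of (d+1)×(d+1) matrices. Assume θ_i ≠ θ_j for 0 ≤ i < j ≤ d and φ_i ≠ 0 and (v − 1)·i·(i − d − 1) ≠ 0 for 1 ≤ i ≤ d. Then (A, A*) satisfies the Askey–Wilson relations AW(2, 0, 0, 1, 1, 2v − 1, 0, 0). -/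
/-- Ring identity behind the theorem. -/
theorem kaw_ring {R K : Type*} [Field K] [Ring R] [Algebra K R] (D L U : R) (v : K)
    (h1 : D * L - L * D = L) (h2 : D * U - U * D = -U)
    (h3 : L * U - U * L = -(2 * v) • D) :
    ((D + L) * ((D + L) * (D + U) - (D + U) * (D + L))
      - ((D + L) * (D + U) - (D + U) * (D + L)) * (D + L)
      = (D + U) + (2 * v - 1) • (D + L)) ∧
    ((D + U) * ((D + U) * (D + L) - (D + L) * (D + U))
      - ((D + U) * (D + L) - (D + L) * (D + U)) * (D + U)
      = (D + L) + (2 * v - 1) • (D + U)) := by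
  have hC : (D + L) * (D + U) - (D + U) * (D + L) = -U - L - (2 * v) • D := by
    have : (D + L) * (D + U) - (D + U) * (D + L)
      = (D * U - U * D) - (D * L - L * D) + (L * U - U * L) := by noncomm_ring
    rw [this, h1, h2, h3]; module
  have hC' : (D + U) * (D + L) - (D + L) * (D + U) = U + L + (2 * v) • D := by
    rw [← neg_sub, hC]; module
  constructor
  · rw [hC]
    have : (D + L) * (-U - L - (2 * v) • D) - (-U - L - (2 * v) • D) * (D + L)
      = -(D * U - U * D) - (D * L - L * D) - (L * U - U * L)
        + (2 * v) • (D * L - L * D) := by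
      simp only [mul_add, add_mul, mul_sub, sub_mul, mul_neg, neg_mul, mul_smul_comm,
        smul_mul_assoc]
      module
    rw [this, h1, h2, h3]; module
  · rw [hC']
    have : (D + U) * (U + L + (2 * v) • D) - (U + L + (2 * v) • D) * (D + U)
      = (D * U - U * D) + (D * L - L * D) - (L * U - U * L)
        - (2 * v) • (D * U - U * D) := by
      simp only [mul_add, add_mul, mul_smul_comm, smul_mul_assoc]
      module
    rw [this, h1, h2, h3]; module

/-- The product lowering times raising. -/
theorem kaw_LU {K : Type*} [Field K] (d : ℕ) (ψ : ℕ → K) (h0 : ψ 0 = 0) :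
    (Matrix.of fun i j : Fin (d + 1) => if (j : ℕ) + 1 = i then (1 : K) else 0) *
    (Matrix.of fun i j : Fin (d + 1) => if (i : ℕ) + 1 = j then ψ j else 0)
    = Matrix.diagonal fun i : Fin (d + 1) => ψ i := by
  ext i j
  rw [Matrix.mul_apply, Matrix.diagonal_apply]
  simp only [Matrix.of_apply]
  by_cases hi : (i : ℕ) = 0
  · rw [Finset.sum_eq_zero]
    · simp [hi, h0]
    · intro k _
      rw [if_neg (by omega), zero_mul]
  · rw [Finset.sum_eq_single (⟨i - 1, by omega⟩ : Fin (d + 1))]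
    · have : (i : ℕ) - 1 + 1 = i := by omega
      simp only [this, if_true, one_mul, Fin.ext_iff]
      split_ifs with h
      · rw [h]
      · rfl
    · intro k _ hk
      rw [if_neg, zero_mul]
      intro h
      apply hk
      ext
      simp only
      omega
    · simp

/-- The product raising times lowering. -/
theorem kaw_UL {K : Type*} [Field K] (d : ℕ) (ψ : ℕ → K) (h0 : ψ (d + 1) = 0) :
    (Matrix.of fun i j : Fin (d + 1) => if (i : ℕ) + 1 = j then ψ j else 0) *
    (Matrix.of fun i j : Fin (d + 1) => if (j : ℕ) + 1 = i then (1 : K) else 0)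
    = Matrix.diagonal fun i : Fin (d + 1) => ψ (i + 1) := by
  ext i j
  rw [Matrix.mul_apply, Matrix.diagonal_apply]
  simp only [Matrix.of_apply]
  by_cases hi : (i : ℕ) = d
  · rw [Finset.sum_eq_zero]
    · simp [hi, h0]
    · intro k _
      rw [if_neg (by omega), zero_mul]
  · rw [Finset.sum_eq_single (⟨i + 1, by omega⟩ : Fin (d + 1))]
    · by_cases h : i = j
      · simp [h]
      · have h' : ¬ ((j : ℕ) = i) := fun e => h (Fin.ext e.symm)
        simp [h, h']
    · intro k _ hk
      rw [if_neg, zero_mul]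
      intro h
      apply hk
      ext
      simp only
      omega
    · simp

/-- Askey–Wilson relations for the normalized Krawtchouk split pair. -/
theorem krawtchouk_askey_wilson
    {K : Type*} [Field K] [IsAlgClosed K] (hchar : ringChar K ≠ 2)
    (d : ℕ) (v : K)
    (θ θs φ : ℕ → K)
    (hθ : ∀ i : ℕ, i ≤ d → θ i = (i : K) - (d : K) / 2)
    (hθs : ∀ i : ℕ, i ≤ d → θs i = (i : K) - (d : K) / 2)
    (hφ : ∀ i : ℕ, 1 ≤ i → i ≤ d → φ i = v * (i : K) * ((i : K) - (d : K) - 1))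
    (hθne : ∀ i j : ℕ, i < j → j ≤ d → θ i ≠ θ j)
    (hne : ∀ i : ℕ, 1 ≤ i → i ≤ d →
      φ i ≠ 0 ∧ (v - 1) * (i : K) * ((i : K) - (d : K) - 1) ≠ 0) :
    MatSatisfiesAW (splitPair (d := d) θ θs φ).1 (splitPair (d := d) θ θs φ).2
      2 0 0 1 1 (2 * v - 1) 0 0 := by
  have h2 : (2 : K) ≠ 0 := Ring.two_ne_zero hchar
  set ψ : ℕ → K := fun i => v * (i : K) * ((i : K) - (d : K) - 1) with hψ
  set D : Matrix (Fin (d + 1)) (Fin (d + 1)) K :=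
    Matrix.diagonal fun i => ((i : ℕ) : K) - (d : K) / 2 with hD
  set L : Matrix (Fin (d + 1)) (Fin (d + 1)) K :=
    Matrix.of fun i j => if (j : ℕ) + 1 = i then (1 : K) else 0 with hL
  set U : Matrix (Fin (d + 1)) (Fin (d + 1)) K :=
    Matrix.of fun i j => if (i : ℕ) + 1 = j then ψ j else 0 with hU
  have hA : (splitPair (d := d) θ θs φ).1 = D + L := by
    ext i j
    simp only [splitPair, hD, hL, Matrix.of_apply, Matrix.add_apply, Matrix.diagonal_apply,
      Fin.ext_iff]
    by_cases h : (i : ℕ) = j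
    · rw [if_pos h, if_pos h, if_neg (by omega), hθ i (by omega), add_zero]
    · rw [if_neg h, if_neg h, zero_add]
  have hAs : (splitPair (d := d) θ θs φ).2 = D + U := by
    ext i j
    simp only [splitPair, hD, hU, Matrix.of_apply, Matrix.add_apply, Matrix.diagonal_apply,
      Fin.ext_iff]
    by_cases h : (i : ℕ) = j
    · rw [if_pos h, if_pos h, if_neg (by omega), hθs i (by omega), add_zero]
    · rw [if_neg h, if_neg h, zero_add]
      by_cases h' : (i : ℕ) + 1 = j
      · rw [if_pos h', if_pos h', hφ j (by omega) (by omega)]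
      · rw [if_neg h', if_neg h']
  have e1 : D * L - L * D = L := by
    ext i j
    simp only [hD, hL, Matrix.sub_apply, Matrix.diagonal_mul, Matrix.mul_diagonal,
      Matrix.of_apply]
    split_ifs with h
    · rw [← h]; push_cast; ring
    · ring
  have e2 : D * U - U * D = -U := by
    ext i j
    simp only [hD, hU, Matrix.sub_apply, Matrix.neg_apply, Matrix.diagonal_mul,
      Matrix.mul_diagonal, Matrix.of_apply]
    split_ifs with h
    · rw [← h]; push_cast; ring
    · ring
  have e3 : L * U - U * L = -(2 * v) • D := by
    rw [hL, hU, kaw_LU d ψ (by simp [hψ]), kaw_UL d ψ (by simp [hψ]), hD]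
    ext i j
    simp only [Matrix.sub_apply, Matrix.smul_apply, Matrix.diagonal_apply, hψ, smul_eq_mul]
    split_ifs with h
    · push_cast; field_simp; ring
    · ring
  obtain ⟨r1, r2⟩ := kaw_ring D L U v e1 e2 e3
  rw [hA, hAs]
  unfold MatSatisfiesAW
  generalize D + L = A at *
  generalize D + U = B at *
  simp only [zero_smul, one_smul, sub_zero, zero_add, add_zero, two_smul]
  constructor
  · rw [sub_eq_iff_eq_add, add_comm _ B, ← r1]; noncomm_ring
  · rw [sub_eq_iff_eq_add, add_comm _ A, ← r2]; noncomm_ring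
end

section
/- (Askey–Wilson relations in the orphan case.) Let K be an algebraically closed field with char(K) = 2 and let s, s*, r be scalars in K. Let (A, A*) be the associated split pair of 4×4 matrices determined by the data θ = (0, s + 1, 1, s), θ* = (0, s* + 1, 1, s*), φ = (r, 1, r + s + s*), i.e., A is lower bidiagonal with diagonal entries 0, s + 1, 1, s and all subdiagonal entries equal to 1, and A* is upper bidiagonal with diagonal entries 0, s* + 1, 1, s* and superdiagonal entries r, 1, r + s + s*. Then (A, A*) satisfies the Askey–Wilson relations AW(0, 1, 1, s² + s, (s*)² + s*, s·s*, r·s, r·s*). -/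
set_option maxHeartbeats 4000000 in
/-- Askey–Wilson relations for the orphan split pair in characteristic 2. -/
theorem orphan_askey_wilson
    {K : Type*} [Field K] [IsAlgClosed K] (hchar : ringChar K = 2)
    (s ss r : K)
    (θ θs φ : ℕ → K)
    (hθ0 : θ 0 = 0) (hθ1 : θ 1 = s + 1) (hθ2 : θ 2 = 1) (hθ3 : θ 3 = s)
    (hθs0 : θs 0 = 0) (hθs1 : θs 1 = ss + 1) (hθs2 : θs 2 = 1) (hθs3 : θs 3 = ss)
    (hφ1 : φ 1 = r) (hφ2 : φ 2 = 1) (hφ3 : φ 3 = r + s + ss) :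
    MatSatisfiesAW (splitPair (d := 3) θ θs φ).1 (splitPair (d := 3) θ θs φ).2
      0 1 1 (s ^ 2 + s) (ss ^ 2 + ss) (s * ss) (r * s) (r * ss) := by
  have h2 : (2 : K) = 0 := by
    have := ringChar.Nat.cast_ringChar (R := K)
    rw [hchar] at this
    exact_mod_cast this
  have hA : (splitPair (d := 3) θ θs φ).1 =
      !![0, 0, 0, 0; 1, s + 1, 0, 0; 0, 1, 1, 0; 0, 0, 1, s] := by
    ext i j
    fin_cases i <;> fin_cases j <;> simp [splitPair, hθ0, hθ1, hθ2, hθ3]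
  have hB : (splitPair (d := 3) θ θs φ).2 =
      !![0, r, 0, 0; 0, ss + 1, 1, 0; 0, 0, 1, r + s + ss; 0, 0, 0, ss] := by
    ext i j
    fin_cases i <;> fin_cases j <;>
      simp [splitPair, hθs0, hθs1, hθs2, hθs3, hφ1, hφ2, hφ3]
  rw [hA, hB]
  constructor
  · ext i j
    fin_cases i <;> fin_cases j <;>
      simp [pow_two] <;> grind
  · ext i j
    fin_cases i <;> fin_cases j <;>
      simp [pow_two] <;> grind
end
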